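/- arXiv:2309.10384 — 4 statements merged into one kernel-verified Lean document; each statement's English description precedes it below -/
import Mathlib

section
/- Let p > 3 and h ∈ (1, p−2). For every c > 0 there exists L₀ ≥ 1 such that for all L ≥ L₀, all t ≥ 0 and all r > 0: ∫_0^t W(t−τ, r, f_τ) dτ ≤ c (cosh r)^{−1/2} ⟨t−r⟩^{−h}, where f_τ(λ) = (L+λ)^{1−p} ⟨τ−λ⟩^{−h} sinh λ · (cosh λ)^{−1/2}. -/
open MeasureTheory intervalIntegral

/-- The Japanese bracket `⟨x⟩ = (1 + x²)^{1/2}`. -/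
noncomputable def jap (x : ℝ) : ℝ := Real.sqrt (1 + x ^ 2)

/-- The kernel `W(σ,r,f)` arising from the Duhamel integral for the shifted wave equation
on the hyperbolic plane, with `a(s) = 2 cosh s` (so `a'(s) = 2 sinh s`). -/
noncomputable def Wker (σ r : ℝ) (f : ℝ → ℝ) : ℝ :=
  ∫ s in (0 : ℝ)..σ, ∫ l in |r - s|..(r + s),
    f l * (2 * Real.sinh s) *
      ((2 * Real.cosh σ - 2 * Real.cosh s) * (2 * Real.cosh (r + l) - 2 * Real.cosh s) *
        (2 * Real.cosh s - 2 * Real.cosh (r - l))) ^ (-(1 / 2) : ℝ)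

/-!
By Tonelli's theorem the `s`-integration in `Wker` may be performed first. In the variable
`a = 2 cosh s` it is an arcsine integral, so that the kernel is at most `π` times the inverse square
root of the gap `|2 cosh σ - 2 cosh (r + λ)|`. With `y = (σ - r - λ) / 2` the gap is at least
`sinh λ * cosh r` times a function of `y`: this produces the factor `(cosh r) ^ (-1 / 2)`.

For `p - 1 = δ + (h + 1 + δ)` the weight `(L + λ) ^ (1 - p)` is at most
`L ^ (-δ) * (1 + λ) ^ (-(h + 1 + δ))`, and the power of `1 + λ` is traded for
`⟨t - r - (τ - λ)⟩ ^ (-h)` times an integrable function of `y`. In the characteristic coordinates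
`u = τ - λ` and `y` the double integral over `(τ, λ)` then splits into a product, and the integral
over `u` is the convolution of `⟨·⟩ ^ (-h)` with itself, which is `O(⟨t - r⟩ ^ (-h))` because
`h > 1`. Smallness comes from `L ^ (-δ)`. As `‖∫ f‖ₑ ≤ ∫⁻ ‖f‖ₑ` for every `f`, integrability never
has to be checked beforehand.
-/

open Set Real

/-! ### The kernel -/

lemma two_mul_cosh_monotoneOn : MonotoneOn (fun s => 2 * cosh s) (Ici 0) :=
  fun _ hx _ hy hxy =>
    mul_le_mul_of_nonneg_left (cosh_strictMonoOn.monotoneOn hx hy hxy) zero_le_two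

lemma hasDerivAt_two_mul_cosh (s : ℝ) : HasDerivAt (fun s => 2 * cosh s) (2 * sinh s) s :=
  (hasDerivAt_cosh s).const_mul 2

lemma hasDerivAt_arcsin_div_sub {D M x : ℝ} (hx : x ∈ Ioo D M) :
    HasDerivAt (fun x => arcsin ((2 * x - M - D) / (M - D)))
      (((M - x) * (x - D)) ^ (-(1 / 2) : ℝ)) x := by
  obtain ⟨hD, hM⟩ := hx
  have hpos : 0 < M - D := by linarith
  have hprod : 0 < (M - x) * (x - D) := mul_pos (by linarith) (by linarith)
  have haffine : HasDerivAt (fun x => (2 * x - M - D) / (M - D)) (2 / (M - D)) x := by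
    simpa using ((((hasDerivAt_id x).const_mul 2).sub_const M).sub_const D).div_const (M - D)
  have hne_neg_one : (2 * x - M - D) / (M - D) ≠ -1 := by
    rw [Ne, div_eq_iff hpos.ne']
    intro h
    linarith
  have hne_one : (2 * x - M - D) / (M - D) ≠ 1 := by
    rw [Ne, div_eq_iff hpos.ne']
    intro h
    linarith
  have hsq : 1 - ((2 * x - M - D) / (M - D)) ^ 2 = 4 * ((M - x) * (x - D)) / (M - D) ^ 2 := by
    field_simp
    ring
  refine ((hasDerivAt_arcsin hne_neg_one hne_one).comp x haffine).congr_deriv ?_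
  have hsqrt := (sqrt_pos.2 hprod).ne'
  rw [hsq, sqrt_div (by positivity), sqrt_sq hpos.le, sqrt_mul (by norm_num),
    show √4 = 2 by rw [sqrt_eq_iff_mul_self_eq] <;> norm_num, rpow_neg hprod.le, ← sqrt_eq_rpow]
  field_simp

lemma lintegral_deriv_mul_arcsine_le {S : Set ℝ} (hS : MeasurableSet S) {u u' : ℝ → ℝ} {D M : ℝ}
    (hmaps : MapsTo u S (Ioo D M)) (hmono : MonotoneOn u S)
    (hu : ∀ s ∈ S, HasDerivWithinAt u (u' s) S s) :
    ∫⁻ s in S, ENNReal.ofReal (u' s * ((M - u s) * (u s - D)) ^ (-(1 / 2) : ℝ)) ≤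
      ENNReal.ofReal π := by
  set g : ℝ → ℝ := fun x => arcsin ((2 * x - M - D) / (M - D))
  have hderiv : ∀ s ∈ S, HasDerivWithinAt (g ∘ u)
      (u' s * ((M - u s) * (u s - D)) ^ (-(1 / 2) : ℝ)) S s := fun s hs =>
    ((hasDerivAt_arcsin_div_sub (hmaps hs)).comp_hasDerivWithinAt s (hu s hs)).congr_deriv
      (mul_comm _ _)
  have hgu : MonotoneOn (g ∘ u) S := fun x hx y hy hxy => by
    have hDM : 0 ≤ M - D := by linarith [(hmaps hx).1, (hmaps hx).2]
    have := hmono hx hy hxy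
    exact monotone_arcsin (by gcongr)
  calc _ = volume (g ∘ u '' S) := lintegral_deriv_eq_volume_image_of_monotoneOn hS hderiv hgu
    _ ≤ volume (Icc (-(π / 2)) (π / 2)) :=
        measure_mono (image_subset_iff.2 fun s _ => arcsin_mem_Icc _)
    _ = ENNReal.ofReal π := by rw [volume_Icc]; ring_nf

/-- The density of `Wker σ r f` with respect to `f(λ) dλ ds`. -/
noncomputable def kernelDensity (σ r s l : ℝ) : ℝ :=
  2 * sinh s *
    ((2 * cosh σ - 2 * cosh s) * (2 * cosh (r + l) - 2 * cosh s) *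
      (2 * cosh s - 2 * cosh (r - l))) ^ (-(1 / 2) : ℝ)

lemma Wker_eq_integral_kernelDensity (σ r : ℝ) (f : ℝ → ℝ) :
    Wker σ r f = ∫ s in (0 : ℝ)..σ, ∫ l in |r - s|..(r + s), f l * kernelDensity σ r s l := by
  simp only [Wker, kernelDensity, mul_assoc]

-- Only the factor containing the larger of `A` and `B` is bounded below by the gap `|A - B|`.
lemma sub_mul_sub_mul_rpow_le {A B x z a : ℝ} (hA : x ≤ A) (hB : x ≤ B) (hAB : A ≠ B) (hz : 0 ≤ z)
    (ha : a ≤ 0) :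
    ((A - x) * (B - x) * z) ^ a ≤ |A - B| ^ a * ((min A B - x) * z) ^ a := by
  have hgap : 0 < |A - B| := abs_pos.2 (sub_ne_zero.2 hAB)
  have hmax : |A - B| ≤ max A B - x := by
    rw [← max_sub_min_eq_abs']
    linarith [le_min hA hB]
  have hmin : 0 ≤ (min A B - x) * z := mul_nonneg (sub_nonneg.2 (le_min hA hB)) hz
  have hfactor : (A - x) * (B - x) * z = (max A B - x) * ((min A B - x) * z) := by
    rcases le_total A B with h | h
    · rw [max_eq_right h, min_eq_left h]
      ring
    · rw [max_eq_left h, min_eq_right h]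
      ring
  rw [hfactor, mul_rpow (hgap.le.trans hmax) hmin]
  gcongr ?_ * _
  exact rpow_le_rpow_of_nonpos hgap hmax ha

lemma two_mul_cosh_mem_Ioo {d e s : ℝ} (hd : 0 ≤ d) (hs : s ∈ Ioo d e) :
    2 * cosh s ∈ Ioo (2 * cosh d) (2 * cosh e) := by
  have hs0 : 0 < s := hd.trans_lt hs.1
  have hlow := cosh_strictMonoOn hd hs0.le hs.1
  have hhigh := cosh_strictMonoOn hs0.le (hs0.trans hs.2).le hs.2
  exact ⟨by linarith, by linarith⟩

lemma kernelDensity_le {σ r l s : ℝ} (hne : cosh σ ≠ cosh (r + l))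
    (hs : s ∈ Ioo |r - l| (min σ (r + l))) :
    kernelDensity σ r s l ≤ |2 * cosh σ - 2 * cosh (r + l)| ^ (-(1 / 2) : ℝ) *
      (2 * sinh s * ((2 * cosh (min σ (r + l)) - 2 * cosh s) *
        (2 * cosh s - 2 * cosh |r - l|)) ^ (-(1 / 2) : ℝ)) := by
  have hs0 : 0 < s := (abs_nonneg _).trans_lt hs.1
  obtain ⟨hsσ, hsrl⟩ := lt_min_iff.1 hs.2
  have hσ0 : 0 ≤ σ := (hs0.trans hsσ).le
  have hrl0 : 0 ≤ r + l := (hs0.trans hsrl).le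
  have hfactors := sub_mul_sub_mul_rpow_le (two_mul_cosh_monotoneOn hs0.le hσ0 hsσ.le)
    (two_mul_cosh_monotoneOn hs0.le hrl0 hsrl.le) (by simpa using hne)
    (sub_nonneg.2 (two_mul_cosh_mem_Ioo (abs_nonneg _) hs).1.le)
    (show (-(1 / 2) : ℝ) ≤ 0 by norm_num)
  rw [← two_mul_cosh_monotoneOn.map_min hσ0 hrl0, cosh_abs] at hfactors
  rw [kernelDensity, cosh_abs, mul_left_comm]
  gcongr

lemma kernelDensity_nonneg {σ r l s : ℝ} (hs : s ∈ Ioo |r - l| (min σ (r + l))) :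
    0 ≤ kernelDensity σ r s l := by
  have hs0 : 0 < s := (abs_nonneg _).trans_lt hs.1
  obtain ⟨hsσ, hsrl⟩ := lt_min_iff.1 hs.2
  have hlow := (two_mul_cosh_mem_Ioo (abs_nonneg _) hs).1
  have hσ := two_mul_cosh_monotoneOn hs0.le (hs0.trans hsσ).le hsσ.le
  have hrl := two_mul_cosh_monotoneOn hs0.le (hs0.trans hsrl).le hsrl.le
  rw [cosh_abs] at hlow
  exact mul_nonneg (mul_nonneg zero_le_two (sinh_nonneg_iff.2 hs0.le)) <|
    rpow_nonneg (mul_nonneg (mul_nonneg (sub_nonneg.2 hσ) (sub_nonneg.2 hrl))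
      (sub_nonneg.2 hlow.le)) _

lemma lintegral_kernelDensity_le {σ r l : ℝ} (hne : cosh σ ≠ cosh (r + l)) :
    ∫⁻ s in Icc |r - l| (min σ (r + l)), ‖kernelDensity σ r s l‖ₑ ≤
      ENNReal.ofReal (|2 * cosh σ - 2 * cosh (r + l)| ^ (-(1 / 2) : ℝ) * π) := by
  have hmono : MonotoneOn (fun s => 2 * cosh s) (Ioo |r - l| (min σ (r + l))) :=
    two_mul_cosh_monotoneOn.mono fun s hs => ((abs_nonneg _).trans_lt hs.1).le
  have hgap : 0 ≤ |2 * cosh σ - 2 * cosh (r + l)| ^ (-(1 / 2) : ℝ) := by positivity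
  rw [ENNReal.ofReal_mul hgap, ← restrict_Ioo_eq_restrict_Icc]
  refine (setLIntegral_mono' measurableSet_Ioo fun s hs => ?_).trans <|
    (lintegral_const_mul' _ _ ENNReal.ofReal_ne_top).trans_le <|
    mul_le_mul_right (lintegral_deriv_mul_arcsine_le measurableSet_Ioo
      (fun s hs => two_mul_cosh_mem_Ioo (abs_nonneg (r - l)) hs) hmono
      fun s _ => (hasDerivAt_two_mul_cosh s).hasDerivWithinAt) _
  rw [Real.enorm_of_nonneg (kernelDensity_nonneg hs), ← ENNReal.ofReal_mul hgap]
  exact ENNReal.ofReal_le_ofReal (kernelDensity_le hne hs)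

lemma enorm_intervalIntegral_le_lintegral_enorm {a b : ℝ} (hab : a ≤ b) (f : ℝ → ℝ) :
    ‖∫ x in a..b, f x‖ₑ ≤ ∫⁻ x in Ioc a b, ‖f x‖ₑ := by
  rw [integral_of_le hab]
  exact enorm_integral_le_lintegral_enorm _

lemma lintegral_lintegral_triangle_swap_le (σ r : ℝ) {F : ℝ → ℝ → ENNReal}
    (hF : Measurable (Function.uncurry F)) :
    ∫⁻ s in Ioc 0 σ, ∫⁻ l in Ioc |r - s| (r + s), F s l ≤
      ∫⁻ l in {l | 0 < l ∧ |r - l| ≤ σ}, ∫⁻ s in Icc |r - l| (min σ (r + l)), F s l := by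
  set S : Set (ℝ × ℝ) := {x | x.1 ∈ Ioc 0 σ ∧ x.2 ∈ Ioc |r - x.1| (r + x.1)}
  set G : ℝ → ℝ → ENNReal := fun s l => S.indicator (Function.uncurry F) (s, l)
  have hS : MeasurableSet S := by measurability
  have hmem : ∀ s l, (s, l) ∈ S → (0 < l ∧ |r - l| ≤ σ) ∧ s ∈ Icc |r - l| (min σ (r + l)) := by
    rintro s l ⟨⟨-, hsσ⟩, hl, hl'⟩
    have hrl : |r - l| ≤ s := abs_le.2 (by constructor <;> linarith [abs_lt.1 hl])
    have hsrl : s ≤ r + l := by linarith [abs_lt.1 hl]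
    exact ⟨⟨(abs_nonneg _).trans_lt hl, hrl.trans hsσ⟩, hrl, le_min hsσ hsrl⟩
  calc _ = ∫⁻ s, ∫⁻ l, G s l := by
        rw [← lintegral_indicator measurableSet_Ioc]
        refine lintegral_congr fun s => ?_
        by_cases hs : s ∈ Ioc 0 σ
        · rw [indicator_of_mem hs, ← lintegral_indicator measurableSet_Ioc]
          refine lintegral_congr fun l => ?_
          simp only [G, S, indicator_apply, mem_ofPred_eq, hs, true_and,
            Function.uncurry_apply_pair]
        · simp only [G, S, indicator_apply, mem_ofPred_eq, hs, false_and, if_false, lintegral_zero]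
    _ = ∫⁻ l, ∫⁻ s, G s l := lintegral_lintegral_swap (hF.indicator hS).aemeasurable
    _ ≤ _ := by
        rw [← lintegral_indicator (by measurability)]
        refine lintegral_mono fun l => ?_
        by_cases hl : 0 < l ∧ |r - l| ≤ σ
        · rw [indicator_of_mem (by exact hl), ← lintegral_indicator measurableSet_Icc]
          refine lintegral_mono fun s => indicator_apply_le' (fun hs => ?_) fun _ => zero_le
          rw [indicator_of_mem (hmem s l hs).2, Function.uncurry_apply_pair]
        · rw [indicator_of_notMem (by exact hl), nonpos_iff_eq_zero]
          refine (lintegral_congr fun s => ?_).trans lintegral_zero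
          exact indicator_of_notMem (fun hs => hl (hmem s l hs).1) _

lemma ae_cosh_ne_cosh_add (σ r : ℝ) : ∀ᵐ l : ℝ, cosh σ ≠ cosh (r + l) := by
  have hfinite : ({σ - r, -σ - r} : Set ℝ).Finite := by simp
  filter_upwards [hfinite.countable.ae_notMem volume] with l hl hcosh
  rcases abs_eq_abs.1 (le_antisymm (cosh_le_cosh.1 hcosh.le) (cosh_le_cosh.1 hcosh.ge)) with h | h
  · exact hl (Or.inl (by linarith))
  · exact hl (Or.inr (by simp only [mem_singleton_iff]; linarith))

lemma enorm_Wker_le {σ r : ℝ} (hσ : 0 ≤ σ) (hr : 0 ≤ r) {f : ℝ → ℝ} (hf : Measurable f) :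
    ‖Wker σ r f‖ₑ ≤ ∫⁻ l in {l | 0 < l ∧ |r - l| ≤ σ}, ‖f l‖ₑ *
      ENNReal.ofReal (|2 * cosh σ - 2 * cosh (r + l)| ^ (-(1 / 2) : ℝ) * π) := by
  have hmeas : Measurable (Function.uncurry fun s l => ‖f l‖ₑ * ‖kernelDensity σ r s l‖ₑ) := by
    unfold kernelDensity
    fun_prop
  calc ‖Wker σ r f‖ₑ
      ≤ ∫⁻ s in Ioc 0 σ, ‖∫ l in |r - s|..(r + s), f l * kernelDensity σ r s l‖ₑ := by
        rw [Wker_eq_integral_kernelDensity]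
        exact enorm_intervalIntegral_le_lintegral_enorm hσ _
    _ ≤ ∫⁻ s in Ioc 0 σ, ∫⁻ l in Ioc |r - s| (r + s), ‖f l‖ₑ * ‖kernelDensity σ r s l‖ₑ := by
        refine setLIntegral_mono' measurableSet_Ioc fun s hs => ?_
        simp only [← enorm_mul]
        have hrs : |r - s| ≤ r + s := abs_le.2 ⟨by linarith [hs.1], by linarith [hs.1]⟩
        exact enorm_intervalIntegral_le_lintegral_enorm hrs _
    _ ≤ ∫⁻ l in {l | 0 < l ∧ |r - l| ≤ σ}, ∫⁻ s in Icc |r - l| (min σ (r + l)),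
          ‖f l‖ₑ * ‖kernelDensity σ r s l‖ₑ := lintegral_lintegral_triangle_swap_le σ r hmeas
    _ ≤ _ := by
        refine lintegral_mono_ae (ae_restrict_of_ae ?_)
        filter_upwards [ae_cosh_ne_cosh_add σ r] with l hne
        rw [lintegral_const_mul' _ _ enorm_ne_top]
        gcongr
        exact lintegral_kernelDensity_le hne

/-! ### The Japanese bracket -/

lemma one_le_jap (x : ℝ) : 1 ≤ jap x := by
  rw [jap, one_le_sqrt]
  linarith [sq_nonneg x]

lemma jap_pos (x : ℝ) : 0 < jap x := one_pos.trans_le (one_le_jap x)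

lemma jap_rpow_nonneg (x h : ℝ) : 0 ≤ jap x ^ h := rpow_nonneg (jap_pos x).le h

lemma jap_le_one_add_abs (x : ℝ) : jap x ≤ 1 + |x| := by
  simpa only [jap, norm_eq_abs, sq_abs] using sqrt_one_add_norm_sq_le x

lemma abs_le_jap (x : ℝ) : |x| ≤ jap x :=
  abs_le_sqrt (by linarith)

lemma measurable_jap : Measurable jap := by
  unfold jap
  fun_prop

lemma jap_add_le (x y : ℝ) : jap (x + y) ≤ jap x + jap y := by
  have hx := jap_pos x
  have hy := jap_pos y
  have hxsq : jap x ^ 2 = 1 + x ^ 2 := sq_sqrt (by positivity)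
  have hysq : jap y ^ 2 = 1 + y ^ 2 := sq_sqrt (by positivity)
  have hxy : x * y ≤ jap x * jap y := (le_abs_self _).trans <| by
    rw [abs_mul]
    exact mul_le_mul (abs_le_jap x) (abs_le_jap y) (abs_nonneg _) hx.le
  rw [jap, sqrt_le_left (by positivity)]
  nlinarith

lemma integrable_jap_rpow {h : ℝ} (hh : 1 < h) : Integrable fun u => jap u ^ (-h) := by
  have hnorm := integrable_rpow_neg_one_add_norm_sq (E := ℝ) (μ := volume) (r := h)
    (by simpa using hh)
  refine hnorm.congr (.of_forall fun u => ?_)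
  simp only [jap, norm_eq_abs, sq_abs]
  rw [sqrt_eq_rpow, ← rpow_mul (by positivity)]
  congr 1
  ring

lemma rpow_neg_le_two_rpow_mul {c b h : ℝ} (hc : 0 < c) (hcb : c ≤ 2 * b) (hh : 0 ≤ h) :
    b ^ (-h) ≤ 2 ^ h * c ^ (-h) := by
  calc b ^ (-h) ≤ (c / 2) ^ (-h) :=
        rpow_le_rpow_of_nonpos (half_pos hc) (by linarith) (neg_nonpos.2 hh)
    _ = 2 ^ h * c ^ (-h) := by
        rw [div_rpow hc.le zero_le_two, rpow_neg zero_le_two, div_inv_eq_mul, mul_comm]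

lemma rpow_neg_mul_rpow_neg_le {a b c h : ℝ} (ha : 0 < a) (hb : 0 < b) (hc : 0 < c)
    (hcab : c ≤ a + b) (hh : 0 ≤ h) :
    a ^ (-h) * b ^ (-h) ≤ 2 ^ h * c ^ (-h) * (a ^ (-h) + b ^ (-h)) := by
  wlog hab : a ≤ b generalizing a b
  · rw [mul_comm (a ^ (-h)), add_comm (a ^ (-h))]
    exact this hb ha (by linarith) (le_of_not_ge hab)
  have hbc : b ^ (-h) ≤ 2 ^ h * c ^ (-h) := rpow_neg_le_two_rpow_mul hc (by linarith) hh
  calc a ^ (-h) * b ^ (-h) ≤ a ^ (-h) * (2 ^ h * c ^ (-h)) := by gcongr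
    _ = 2 ^ h * c ^ (-h) * a ^ (-h) := mul_comm _ _
    _ ≤ 2 ^ h * c ^ (-h) * (a ^ (-h) + b ^ (-h)) := by
        gcongr
        exact le_add_of_nonneg_right (by positivity)

lemma exists_lintegral_jap_convolution_le {h : ℝ} (hh : 1 < h) :
    ∃ C : ℝ, 0 ≤ C ∧ ∀ T : ℝ, ∫⁻ u, ENNReal.ofReal (jap u ^ (-h) * jap (T - u) ^ (-h)) ≤
      ENNReal.ofReal (C * jap T ^ (-h)) := by
  have hjap := measurable_jap
  set I : ENNReal := ∫⁻ u, ENNReal.ofReal (jap u ^ (-h))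
  have hItop : I ≠ ⊤ := (integrable_jap_rpow hh).lintegral_lt_top.ne
  refine ⟨2 ^ h * (2 * I.toReal), by positivity, fun T => ?_⟩
  have hc : 0 ≤ 2 ^ h * jap T ^ (-h) := mul_nonneg (by positivity) (jap_rpow_nonneg T (-h))
  calc ∫⁻ u, ENNReal.ofReal (jap u ^ (-h) * jap (T - u) ^ (-h))
      ≤ ∫⁻ u, ENNReal.ofReal (2 ^ h * jap T ^ (-h)) *
          (ENNReal.ofReal (jap u ^ (-h)) + ENNReal.ofReal (jap (T - u) ^ (-h))) := by
        refine lintegral_mono fun u => ?_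
        rw [← ENNReal.ofReal_add (jap_rpow_nonneg _ _) (jap_rpow_nonneg _ _),
          ← ENNReal.ofReal_mul hc]
        have hT : jap T ≤ jap u + jap (T - u) := by simpa using jap_add_le u (T - u)
        exact ENNReal.ofReal_le_ofReal <|
          rpow_neg_mul_rpow_neg_le (jap_pos _) (jap_pos _) (jap_pos _) hT (by linarith)
    _ = ENNReal.ofReal (2 ^ h * jap T ^ (-h)) * (I + I) := by
        rw [lintegral_const_mul _ (by fun_prop), lintegral_add_left (by fun_prop),
          lintegral_sub_left_eq_self (fun u => ENNReal.ofReal (jap u ^ (-h)))]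
    _ = ENNReal.ofReal (2 ^ h * (2 * I.toReal) * jap T ^ (-h)) := by
        rw [← two_mul, ← ENNReal.ofReal_toReal hItop, ← ENNReal.ofReal_ofNat 2,
          ← ENNReal.ofReal_mul zero_le_two, ← ENNReal.ofReal_mul hc,
          ENNReal.toReal_ofReal ENNReal.toReal_nonneg]
        ring_nf

/-! ### Characteristic coordinates -/

lemma integrable_comp_abs {f : ℝ → ℝ} (hf : IntegrableOn f (Ioi 0)) :
    Integrable fun x => f |x| := by
  have hpos : IntegrableOn (fun x => f |x|) (Ioi 0) :=
    hf.congr_fun (fun x hx => by rw [abs_of_pos hx]) measurableSet_Ioi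
  have hneg : IntegrableOn (fun x => f |x|) (Iic 0) := by
    have hclosed : IntegrableOn (fun x => f |x|) (Ici 0) :=
      Iff.mpr integrableOn_Ici_iff_integrableOn_Ioi hpos
    simpa only [abs_neg, neg_Ici, neg_zero] using hclosed.comp_neg
  rw [← integrableOn_univ, ← Iic_union_Ioi (a := (0 : ℝ))]
  exact hneg.union hpos

lemma integrableOn_Ioi_rpow_mul_one_add_rpow {a b : ℝ} (ha : -1 < a) (hb : b ≤ 0)
    (hab : a + b < -1) : IntegrableOn (fun y : ℝ => y ^ a * (1 + y) ^ b) (Ioi 0) := by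
  have hmeas : Measurable fun y : ℝ => y ^ a * (1 + y) ^ b := by fun_prop
  have hnear : IntegrableOn (fun y : ℝ => y ^ a * (1 + y) ^ b) (Ioc 0 1) := by
    have hrpow : IntegrableOn (fun y : ℝ => y ^ a) (Ioc 0 1) :=
      (intervalIntegrable_iff_integrableOn_Ioc_of_le zero_le_one).1 (intervalIntegrable_rpow' ha)
    refine hrpow.mono' hmeas.aestronglyMeasurable ?_
    filter_upwards [ae_restrict_mem measurableSet_Ioc] with y hy
    have hy0 : 0 < y := hy.1
    rw [norm_of_nonneg (by positivity)]
    exact mul_le_of_le_one_right (by positivity) (rpow_le_one_of_one_le_of_nonpos (by linarith) hb)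
  have hfar : IntegrableOn (fun y : ℝ => y ^ a * (1 + y) ^ b) (Ioi 1) := by
    refine (integrableOn_Ioi_rpow_of_lt hab zero_lt_one).mono' hmeas.aestronglyMeasurable ?_
    filter_upwards [ae_restrict_mem measurableSet_Ioi] with y hy
    have hy0 : 0 < y := zero_lt_one.trans hy
    rw [norm_of_nonneg (by positivity), rpow_add hy0]
    gcongr ?_ * ?_
    exact rpow_le_rpow_of_nonpos hy0 (by linarith) hb
  rw [← Ioc_union_Ioi_eq_Ioi zero_le_one]
  exact hnear.union hfar

/-- The function of the characteristic variable `y = (σ - r - λ) / 2` which controls the kernel: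
the inverse square root singularity on the light cone `σ = r + λ`, with integrable decay away from
it. -/
noncomputable def coneProfile (δ y : ℝ) : ℝ :=
  |y| ^ (-(1 / 2) : ℝ) * (1 + |y|) ^ (-(1 / 2 + δ))

lemma coneProfile_nonneg (δ y : ℝ) : 0 ≤ coneProfile δ y := by
  unfold coneProfile
  positivity

lemma measurable_coneProfile (δ : ℝ) : Measurable (coneProfile δ) := by
  unfold coneProfile
  fun_prop

lemma integrable_coneProfile {δ : ℝ} (hδ : 0 < δ) : Integrable (coneProfile δ) :=
  integrable_comp_abs <| integrableOn_Ioi_rpow_mul_one_add_rpow (by norm_num) (by linarith)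
    (by linarith)

lemma lintegral_lintegral_characteristic (T : ℝ) {g Φ : ℝ → ENNReal} (hg : Measurable g)
    (hΦ : Measurable Φ) :
    ∫⁻ τ, ∫⁻ l, g (τ - l) * Φ ((T - τ - l) / 2) = (∫⁻ u, g u) * ∫⁻ y, Φ y := by
  calc ∫⁻ τ, ∫⁻ l, g (τ - l) * Φ ((T - τ - l) / 2)
      = ∫⁻ τ, ∫⁻ u, g u * Φ ((T + u) / 2 - τ) := by
        refine lintegral_congr fun τ => ?_
        rw [← lintegral_sub_left_eq_self (fun u => g u * Φ ((T + u) / 2 - τ)) τ]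
        refine lintegral_congr fun l => ?_
        congr 2
        ring
    _ = ∫⁻ u, ∫⁻ τ, g u * Φ ((T + u) / 2 - τ) :=
        lintegral_lintegral_swap (Measurable.aemeasurable (by unfold Function.uncurry; fun_prop))
    _ = ∫⁻ u, g u * ∫⁻ y, Φ y := by
        refine lintegral_congr fun u => ?_
        rw [lintegral_const_mul _ (by fun_prop), lintegral_sub_left_eq_self]
    _ = _ := lintegral_mul_const _ hg

lemma exists_lintegral_characteristic_le {h δ : ℝ} (hh : 1 < h) (hδ : 0 < δ) :
    ∃ C : ℝ, 0 ≤ C ∧ ∀ T : ℝ, ∫⁻ τ, ∫⁻ l,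
      ENNReal.ofReal (jap (τ - l) ^ (-h) * jap (T - (τ - l)) ^ (-h)) *
        ENNReal.ofReal (coneProfile δ ((T - τ - l) / 2)) ≤ ENNReal.ofReal (C * jap T ^ (-h)) := by
  have hjap := measurable_jap
  obtain ⟨C, hC, hconv⟩ := exists_lintegral_jap_convolution_le hh
  set P : ENNReal := ∫⁻ y, ENNReal.ofReal (coneProfile δ y)
  have hPtop : P ≠ ⊤ := (integrable_coneProfile hδ).lintegral_lt_top.ne
  refine ⟨P.toReal * C, by positivity, fun T => ?_⟩
  calc _ = (∫⁻ u, ENNReal.ofReal (jap u ^ (-h) * jap (T - u) ^ (-h))) * P :=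
        lintegral_lintegral_characteristic T
          (g := fun u => ENNReal.ofReal (jap u ^ (-h) * jap (T - u) ^ (-h))) (by fun_prop)
          (measurable_coneProfile δ).ennreal_ofReal
    _ ≤ ENNReal.ofReal (C * jap T ^ (-h)) * ENNReal.ofReal P.toReal := by
        rw [ENNReal.ofReal_toReal hPtop]
        gcongr
        exact hconv T
    _ = _ := by
        rw [← ENNReal.ofReal_mul' ENNReal.toReal_nonneg]
        ring_nf

/-! ### The gap across the light cone -/

lemma cosh_sub_cosh (x y : ℝ) :
    cosh x - cosh y = 2 * (sinh ((x + y) / 2) * sinh ((x - y) / 2)) := by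
  calc cosh x - cosh y
      = cosh ((x + y) / 2 + (x - y) / 2) - cosh ((x + y) / 2 - (x - y) / 2) := by ring_nf
    _ = _ := by
        rw [cosh_add, cosh_sub]
        ring

lemma sinh_mul_cosh_le_sinh_add (x : ℝ) {y : ℝ} (hy : 0 ≤ y) :
    sinh x * cosh y ≤ sinh (x + y) := by
  rw [sinh_add]
  exact le_add_of_nonneg_right (mul_nonneg (cosh_pos x).le (sinh_nonneg_iff.2 hy))

lemma sinh_add_le_two_mul_sinh_mul_cosh {x y : ℝ} (hyx : y ≤ x) :
    sinh (x + y) ≤ 2 * (sinh x * cosh y) := by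
  have hsub : 0 ≤ sinh (x - y) := sinh_nonneg_iff.2 (sub_nonneg.2 hyx)
  rw [sinh_sub] at hsub
  rw [sinh_add]
  linarith

lemma mul_cosh_le_one_add_mul_sinh {y : ℝ} (hy : 0 ≤ y) : y * cosh y ≤ (1 + y) * sinh y := by
  have hexp : cosh y - sinh y ≤ 1 := by
    rw [cosh_sub_sinh, exp_le_one_iff]
    linarith
  have hsinh : y ≤ sinh y := self_le_sinh_iff.2 hy
  nlinarith

lemma mul_cosh_le_two_mul_cosh_sub {r l y : ℝ} (hr : 0 ≤ r) (hl : 0 ≤ l) (hy : 0 ≤ y) :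
    sinh l * cosh r * (y * cosh y) ≤ 2 * cosh (r + l + 2 * y) - 2 * cosh (r + l) := by
  have hsinhy : y ≤ sinh y := self_le_sinh_iff.2 hy
  have hsum : 0 ≤ sinh (r + l + y) := sinh_nonneg_iff.2 (by positivity)
  have hshift : sinh l * cosh r * cosh y ≤ sinh (r + l + y) :=
    calc sinh l * cosh r * cosh y ≤ sinh (r + l) * cosh y := by
          rw [add_comm]
          gcongr
          exact sinh_mul_cosh_le_sinh_add l hr
      _ ≤ sinh (r + l + y) := sinh_mul_cosh_le_sinh_add _ hy
  calc sinh l * cosh r * (y * cosh y) = sinh l * cosh r * cosh y * y := by ring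
    _ ≤ sinh (r + l + y) * sinh y := by gcongr
    _ ≤ 4 * (sinh (r + l + y) * sinh y) := by
        linarith [mul_nonneg hsum (hy.trans hsinhy)]
    _ = 2 * (cosh (r + l + 2 * y) - cosh (r + l)) := by
        rw [cosh_sub_cosh]
        ring_nf
    _ = _ := mul_sub _ _ _

lemma mul_div_le_two_mul_cosh_sub {r l y : ℝ} (hr : 0 ≤ r) (hy : 0 ≤ y)
    (hyrl : 2 * y ≤ r + l) :
    sinh l * cosh r * (y / (1 + y)) ≤ 2 * cosh (r + l) - 2 * cosh (r + l - 2 * y) := by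
  have hdiff : 0 ≤ sinh (r + l - y) := sinh_nonneg_iff.2 (by linarith)
  have hsinhy : 0 ≤ sinh y := sinh_nonneg_iff.2 hy
  have hshift : sinh l * cosh r ≤ 2 * (sinh (r + l - y) * cosh y) :=
    calc sinh l * cosh r ≤ sinh (r + l - y + y) := by
          rw [sub_add_cancel, add_comm]
          exact sinh_mul_cosh_le_sinh_add l hr
      _ ≤ _ := sinh_add_le_two_mul_sinh_mul_cosh (by linarith)
  calc sinh l * cosh r * (y / (1 + y)) ≤ 2 * (sinh (r + l - y) * cosh y) * (y / (1 + y)) := by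
        gcongr
    _ = 2 * sinh (r + l - y) * (y * cosh y / (1 + y)) := by ring
    _ ≤ 2 * sinh (r + l - y) * sinh y := by
        gcongr
        rw [div_le_iff₀' (by positivity)]
        exact mul_cosh_le_one_add_mul_sinh hy
    _ ≤ 4 * (sinh (r + l - y) * sinh y) := by
        linarith [mul_nonneg hdiff hsinhy]
    _ = 2 * (cosh (r + l) - cosh (r + l - 2 * y)) := by
        rw [cosh_sub_cosh]
        ring_nf
    _ = _ := mul_sub _ _ _

lemma sinh_mul_cosh_rpow_le_sinh_rpow {x : ℝ} (hx : 0 < x) :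
    sinh x * cosh x ^ (-(1 / 2) : ℝ) ≤ sinh x ^ (1 / 2 : ℝ) := by
  have hsinh : 0 < sinh x := sinh_pos_iff.2 hx
  calc sinh x * cosh x ^ (-(1 / 2) : ℝ) ≤ sinh x * sinh x ^ (-(1 / 2) : ℝ) := by
        gcongr ?_ * ?_
        exact rpow_le_rpow_of_nonpos hsinh (sinh_lt_cosh x).le (by norm_num)
    _ = sinh x ^ (1 / 2 : ℝ) := by
        rw [← rpow_one_add' hsinh.le (by norm_num)]
        norm_num

lemma sinh_mul_cosh_rpow_mul_rpow_le {l c m G : ℝ} (hl : 0 < l) (hc : 0 < c) (hm : 0 < m)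
    (hG : sinh l * c * m ≤ G) :
    sinh l * cosh l ^ (-(1 / 2) : ℝ) * G ^ (-(1 / 2) : ℝ) ≤
      c ^ (-(1 / 2) : ℝ) * m ^ (-(1 / 2) : ℝ) := by
  have hsinh : 0 < sinh l := sinh_pos_iff.2 hl
  have hG0 : 0 < G := (by positivity : 0 < sinh l * c * m).trans_le hG
  calc sinh l * cosh l ^ (-(1 / 2) : ℝ) * G ^ (-(1 / 2) : ℝ)
      ≤ sinh l ^ (1 / 2 : ℝ) * (sinh l * c * m) ^ (-(1 / 2) : ℝ) := by
        gcongr ?_ * ?_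
        · exact sinh_mul_cosh_rpow_le_sinh_rpow hl
        · exact rpow_le_rpow_of_nonpos (by positivity) hG (by norm_num)
    _ = sinh l ^ (1 / 2 : ℝ) * sinh l ^ (-(1 / 2) : ℝ) *
          (c ^ (-(1 / 2) : ℝ) * m ^ (-(1 / 2) : ℝ)) := by
        rw [mul_rpow (by positivity) hm.le, mul_rpow hsinh.le hc.le]
        ring
    _ = _ := by
        rw [← rpow_add hsinh, add_neg_cancel, rpow_zero, one_mul]

/-! ### Decay away from the light cone -/

lemma exists_cosh_rpow_neg_le {a b : ℝ} (ha : 0 < a) (hb : 0 < b) :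
    ∃ C : ℝ, 0 ≤ C ∧ ∀ y : ℝ, 0 ≤ y → cosh y ^ (-b) ≤ C * (1 + y) ^ (-a) := by
  set k := b / a
  have hk : 0 < k := div_pos hb ha
  set K := exp k * 2 ^ k / k
  have hK : 0 < K := by positivity
  refine ⟨K ^ a, by positivity, fun y hy => ?_⟩
  have hcosh : 0 < cosh y := cosh_pos y
  have hlin : 1 + y ≤ K * cosh y ^ k := by
    have hexp : exp y ≤ 2 * cosh y := by
      rw [cosh_eq]
      linarith [exp_pos (-y)]
    calc 1 + y = (1 + y) * k / k := by field_simp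
      _ ≤ exp ((1 + y) * k) / k := by
          gcongr
          linarith [add_one_le_exp ((1 + y) * k)]
      _ = exp k * exp y ^ k / k := by rw [← exp_mul, ← exp_add]; ring_nf
      _ ≤ exp k * (2 * cosh y) ^ k / k := by gcongr
      _ = K * cosh y ^ k := by rw [mul_rpow zero_le_two hcosh.le]; ring
  have hpow : K ^ (-a) * cosh y ^ (-b) ≤ (1 + y) ^ (-a) :=
    calc K ^ (-a) * cosh y ^ (-b) = (K * cosh y ^ k) ^ (-a) := by
          rw [mul_rpow hK.le (by positivity), ← rpow_mul hcosh.le, mul_neg,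
            div_mul_cancel₀ b ha.ne']
      _ ≤ (1 + y) ^ (-a) := rpow_le_rpow_of_nonpos (by positivity) hlin (by linarith)
  rwa [rpow_neg hK.le, inv_mul_le_iff₀ (by positivity)] at hpow

lemma exists_one_add_rpow_mul_cosh_rpow_le {h δ : ℝ} (hh : 0 ≤ h) (hδ : 0 ≤ δ) :
    ∃ C : ℝ, 0 ≤ C ∧ ∀ l y : ℝ, 0 ≤ l → 0 ≤ y →
      (1 + l) ^ (-(h + 1 + δ)) * (y * cosh y) ^ (-(1 / 2) : ℝ) ≤
        C * (jap (2 * y + 2 * l) ^ (-h) * coneProfile δ y) := by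
  obtain ⟨C, hC, hcosh⟩ := exists_cosh_rpow_neg_le (a := h + (1 / 2 + δ)) (b := 1 / 2)
    (by positivity) (by norm_num)
  refine ⟨C * 2 ^ h, by positivity, fun l y hl hy => ?_⟩
  have hprofile := coneProfile_nonneg δ y
  have hjap : jap (2 * y + 2 * l) ≤ 2 * ((1 + y) * (1 + l)) := by
    refine (jap_le_one_add_abs _).trans ?_
    rw [abs_of_nonneg (by positivity)]
    nlinarith [mul_nonneg hy hl]
  have hdecay : ((1 + y) * (1 + l)) ^ (-h) ≤ 2 ^ h * jap (2 * y + 2 * l) ^ (-h) :=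
    rpow_neg_le_two_rpow_mul (jap_pos _) hjap hh
  calc (1 + l) ^ (-(h + 1 + δ)) * (y * cosh y) ^ (-(1 / 2) : ℝ)
      ≤ (1 + l) ^ (-h) * (y ^ (-(1 / 2) : ℝ) * (C * (1 + y) ^ (-(h + (1 / 2 + δ))))) := by
        rw [mul_rpow hy (cosh_pos y).le]
        gcongr
        · linarith
        · linarith
        · exact hcosh y hy
    _ = C * (((1 + y) * (1 + l)) ^ (-h) * coneProfile δ y) := by
        rw [coneProfile, abs_of_nonneg hy, mul_rpow (by positivity) (by positivity), neg_add,
          rpow_add (by positivity)]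
        ring
    _ ≤ C * (2 ^ h * jap (2 * y + 2 * l) ^ (-h) * coneProfile δ y) := by gcongr
    _ = _ := by ring

lemma one_add_rpow_mul_div_rpow_le {h δ l y : ℝ} (hh : 0 ≤ h) (hδ : 0 ≤ δ) (hy : 0 ≤ y)
    (hyl : y ≤ l) :
    (1 + l) ^ (-(h + 1 + δ)) * (y / (1 + y)) ^ (-(1 / 2) : ℝ) ≤
      2 ^ h * (jap (2 * -y + 2 * l) ^ (-h) * coneProfile δ (-y)) := by
  have hl : 0 ≤ l := hy.trans hyl
  have hprofile := coneProfile_nonneg δ (-y)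
  have hjap : jap (2 * -y + 2 * l) ≤ 2 * (1 + l) := by
    refine (jap_le_one_add_abs _).trans ?_
    rw [abs_of_nonneg (by linarith)]
    linarith
  have hweight : (1 + l) ^ (-(h + 1 + δ)) ≤ (1 + l) ^ (-h) * (1 + y) ^ (-(1 + δ)) := by
    rw [add_assoc, neg_add, rpow_add (by positivity)]
    gcongr ?_ * ?_
    exact rpow_le_rpow_of_nonpos (by positivity) (by linarith) (by linarith)
  calc (1 + l) ^ (-(h + 1 + δ)) * (y / (1 + y)) ^ (-(1 / 2) : ℝ)
      ≤ (1 + l) ^ (-h) * (1 + y) ^ (-(1 + δ)) *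
          (y ^ (-(1 / 2) : ℝ) * (1 + y) ^ (1 / 2 : ℝ)) := by
        rw [div_rpow hy (by positivity), rpow_neg (by positivity : 0 ≤ 1 + y), div_inv_eq_mul]
        gcongr
    _ = (1 + l) ^ (-h) * coneProfile δ (-y) := by
        rw [coneProfile, abs_neg, abs_of_nonneg hy,
          show -(1 / 2 + δ) = -(1 + δ) + 1 / 2 by ring, rpow_add (by positivity)]
        ring
    _ ≤ 2 ^ h * jap (2 * -y + 2 * l) ^ (-h) * coneProfile δ (-y) := by
        gcongr
        exact rpow_neg_le_two_rpow_mul (jap_pos _) hjap hh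
    _ = _ := by ring

lemma mul_sinh_mul_cosh_rpow_mul_rpow_le {w D l c m G : ℝ} (hw : 0 ≤ w) (hl : 0 < l) (hc : 0 < c)
    (hm : 0 < m) (hG : sinh l * c * m ≤ G) (hD : w * m ^ (-(1 / 2) : ℝ) ≤ D) :
    w * (sinh l * cosh l ^ (-(1 / 2) : ℝ) * G ^ (-(1 / 2) : ℝ)) ≤ c ^ (-(1 / 2) : ℝ) * D := by
  calc _ ≤ w * (c ^ (-(1 / 2) : ℝ) * m ^ (-(1 / 2) : ℝ)) :=
        mul_le_mul_of_nonneg_left (sinh_mul_cosh_rpow_mul_rpow_le hl hc hm hG) hw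
    _ = c ^ (-(1 / 2) : ℝ) * (w * m ^ (-(1 / 2) : ℝ)) := mul_left_comm _ _ _
    _ ≤ c ^ (-(1 / 2) : ℝ) * D := by gcongr

lemma exists_weighted_gap_rpow_le {h δ : ℝ} (hh : 0 ≤ h) (hδ : 0 ≤ δ) :
    ∃ C : ℝ, 0 ≤ C ∧ ∀ r l y : ℝ, 0 ≤ r → 0 < l → -r ≤ y → -l ≤ y →
      (1 + l) ^ (-(h + 1 + δ)) * (sinh l * cosh l ^ (-(1 / 2) : ℝ) *
        |2 * cosh (r + l + 2 * y) - 2 * cosh (r + l)| ^ (-(1 / 2) : ℝ)) ≤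
      cosh r ^ (-(1 / 2) : ℝ) * (C * (jap (2 * y + 2 * l) ^ (-h) * coneProfile δ y)) := by
  obtain ⟨C, hC, habove⟩ := exists_one_add_rpow_mul_cosh_rpow_le hh hδ
  refine ⟨max C (2 ^ h), le_max_of_le_left hC, fun r l y hr hl hyr hyl => ?_⟩
  have hcosh : 0 < cosh r := cosh_pos r
  have hweight : 0 ≤ (1 + l) ^ (-(h + 1 + δ)) := by positivity
  have hdecay : 0 ≤ jap (2 * y + 2 * l) ^ (-h) * coneProfile δ y :=
    mul_nonneg (jap_rpow_nonneg _ _) (coneProfile_nonneg δ y)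
  rcases lt_trichotomy y 0 with hy | rfl | hy
  · obtain ⟨z, rfl⟩ : ∃ z, y = -z := ⟨-y, (neg_neg y).symm⟩
    have hz : 0 < z := neg_lt_zero.1 hy
    have hgap := mul_div_le_two_mul_cosh_sub (r := r) (l := l) hr hz.le (by linarith)
    rw [sub_eq_add_neg (r + l), ← mul_neg] at hgap
    exact mul_sinh_mul_cosh_rpow_mul_rpow_le hweight hl hcosh (by positivity : 0 < z / (1 + z))
      (hgap.trans ((le_abs_self _).trans_eq (abs_sub_comm _ _))) <|
      (one_add_rpow_mul_div_rpow_le hh hδ hz.le (by linarith)).trans <|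
        mul_le_mul_of_nonneg_right (le_max_right _ _) hdecay
  · -- On the light cone itself the left-hand side vanishes, as `0 ^ (-1 / 2) = 0`.
    rw [mul_zero, add_zero, sub_self, abs_zero, zero_rpow (by norm_num), mul_zero, mul_zero]
    rw [mul_zero] at hdecay
    positivity
  · have hgap := mul_cosh_le_two_mul_cosh_sub hr hl.le hy.le
    exact mul_sinh_mul_cosh_rpow_mul_rpow_le hweight hl hcosh (by positivity : 0 < y * cosh y)
      (hgap.trans (le_abs_self _)) <|
      (habove l y hl.le hy.le).trans <| mul_le_mul_of_nonneg_right (le_max_left _ _) hdecay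

/-! ### The Duhamel term -/

lemma add_rpow_neg_add_le {L l a b : ℝ} (hL : 1 ≤ L) (hl : 0 ≤ l) (ha : 0 ≤ a) (hb : 0 ≤ b) :
    (L + l) ^ (-(a + b)) ≤ L ^ (-a) * (1 + l) ^ (-b) := by
  have hL0 : 0 < L := one_pos.trans_le hL
  rw [neg_add, rpow_add (by positivity)]
  gcongr ?_ * ?_
  · exact rpow_le_rpow_of_nonpos hL0 (by linarith) (by linarith)
  · exact rpow_le_rpow_of_nonpos (by positivity) (by linarith) (by linarith)

/-- The function `f_τ` of the estimate, which bounds the nonlinearity at time `τ`; `L` stands for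
`ln (1 / ε)`, with `ε` the size of the data. -/
noncomputable def duhamelSource (p h L τ l : ℝ) : ℝ :=
  (L + l) ^ (1 - p) * jap (τ - l) ^ (-h) * sinh l * cosh l ^ (-(1 / 2) : ℝ)

lemma measurable_duhamelSource (p h L τ : ℝ) : Measurable (duhamelSource p h L τ) := by
  have hjap := measurable_jap
  unfold duhamelSource
  fun_prop

lemma duhamelSource_nonneg (p h τ : ℝ) {L l : ℝ} (hL : 0 ≤ L) (hl : 0 ≤ l) :
    0 ≤ duhamelSource p h L τ l := by
  have hjap := jap_rpow_nonneg (τ - l) (-h)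
  unfold duhamelSource
  positivity

lemma exists_duhamelSource_mul_gap_rpow_le {h δ : ℝ} (hh : 0 ≤ h) (hδ : 0 ≤ δ) :
    ∃ C : ℝ, 0 ≤ C ∧ ∀ L r σ τ l : ℝ, 1 ≤ L → 0 ≤ r → 0 < l → |r - l| ≤ σ →
      duhamelSource (h + 2 + 2 * δ) h L τ l *
        |2 * cosh σ - 2 * cosh (r + l)| ^ (-(1 / 2) : ℝ) ≤
      C * L ^ (-δ) * cosh r ^ (-(1 / 2) : ℝ) * (jap (τ - l) ^ (-h) *
        jap (σ - r + l) ^ (-h) * coneProfile δ ((σ - r - l) / 2)) := by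
  obtain ⟨C, hC, hker⟩ := exists_weighted_gap_rpow_le hh hδ
  refine ⟨C, hC, fun L r σ τ l hL hr hl hσ => ?_⟩
  obtain ⟨y, rfl⟩ : ∃ y, σ = r + l + 2 * y := ⟨(σ - r - l) / 2, by ring⟩
  obtain ⟨hlow, hhigh⟩ := abs_le.1 hσ
  have hjap := jap_rpow_nonneg (τ - l) (-h)
  have hLδ : 0 ≤ L ^ (-δ) := rpow_nonneg (by linarith) _
  set k := sinh l * cosh l ^ (-(1 / 2) : ℝ) *
    |2 * cosh (r + l + 2 * y) - 2 * cosh (r + l)| ^ (-(1 / 2) : ℝ)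
  have hk : 0 ≤ k := by positivity
  calc duhamelSource (h + 2 + 2 * δ) h L τ l * _
      = jap (τ - l) ^ (-h) * ((L + l) ^ (-(δ + (h + 1 + δ))) * k) := by
        rw [duhamelSource, show 1 - (h + 2 + 2 * δ) = -(δ + (h + 1 + δ)) by ring]
        ring
    _ ≤ jap (τ - l) ^ (-h) * (L ^ (-δ) * (1 + l) ^ (-(h + 1 + δ)) * k) := by
        gcongr
        exact add_rpow_neg_add_le hL hl.le hδ (by positivity)
    _ = jap (τ - l) ^ (-h) * L ^ (-δ) * ((1 + l) ^ (-(h + 1 + δ)) * k) := by ring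
    _ ≤ jap (τ - l) ^ (-h) * L ^ (-δ) * (cosh r ^ (-(1 / 2) : ℝ) *
          (C * (jap (2 * y + 2 * l) ^ (-h) * coneProfile δ y))) :=
        mul_le_mul_of_nonneg_left (hker r l y hr hl (by linarith) (by linarith))
          (mul_nonneg hjap hLδ)
    _ = _ := by
        rw [show r + l + 2 * y - r + l = 2 * y + 2 * l by ring,
          show (r + l + 2 * y - r - l) / 2 = y by ring]
        ring

lemma exists_enorm_Wker_duhamelSource_le {h δ : ℝ} (hh : 0 ≤ h) (hδ : 0 ≤ δ) :
    ∃ C : ℝ, 0 ≤ C ∧ ∀ L r t τ : ℝ, 1 ≤ L → 0 ≤ r → τ ≤ t →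
      ‖Wker (t - τ) r (duhamelSource (h + 2 + 2 * δ) h L τ)‖ₑ ≤
        ENNReal.ofReal (C * L ^ (-δ) * cosh r ^ (-(1 / 2) : ℝ)) * ∫⁻ l,
          ENNReal.ofReal (jap (τ - l) ^ (-h) * jap (t - r - (τ - l)) ^ (-h)) *
            ENNReal.ofReal (coneProfile δ ((t - r - τ - l) / 2)) := by
  obtain ⟨C, hC, hsource⟩ := exists_duhamelSource_mul_gap_rpow_le hh hδ
  refine ⟨π * C, by positivity, fun L r t τ hL hr hτ => ?_⟩
  have hL0 : 0 ≤ L := zero_le_one.trans hL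
  have hcosh : 0 < cosh r := cosh_pos r
  refine (enorm_Wker_le (sub_nonneg.2 hτ) hr (measurable_duhamelSource _ h L τ)).trans ?_
  rw [← lintegral_const_mul' _ _ ENNReal.ofReal_ne_top]
  refine (setLIntegral_mono' (by measurability) fun l hlσ => ?_).trans
    (setLIntegral_le_lintegral _ _)
  obtain ⟨hl, hrl⟩ : 0 < l ∧ |r - l| ≤ t - τ := hlσ
  have hjap := mul_nonneg (jap_rpow_nonneg (τ - l) (-h)) (jap_rpow_nonneg (t - r - (τ - l)) (-h))
  have hf := duhamelSource_nonneg (h + 2 + 2 * δ) h τ hL0 hl.le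
  have hbound := hsource L r (t - τ) τ l hL hr hl hrl
  rw [show t - τ - r + l = t - r - (τ - l) by ring, sub_right_comm t τ r] at hbound
  rw [Real.enorm_of_nonneg hf, ← ENNReal.ofReal_mul hf, ← ENNReal.ofReal_mul hjap,
    ← ENNReal.ofReal_mul (by positivity)]
  refine ENNReal.ofReal_le_ofReal ?_
  calc _ = π * (duhamelSource (h + 2 + 2 * δ) h L τ l *
          |2 * cosh (t - τ) - 2 * cosh (r + l)| ^ (-(1 / 2) : ℝ)) := by ring
    _ ≤ π * _ := mul_le_mul_of_nonneg_left hbound pi_pos.le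
    _ = _ := by ring

lemma exists_integral_Wker_duhamelSource_le {h δ : ℝ} (hh : 1 < h) (hδ : 0 < δ) :
    ∃ C : ℝ, ∀ L t r : ℝ, 1 ≤ L → 0 ≤ t → 0 ≤ r →
      ∫ τ in (0 : ℝ)..t, Wker (t - τ) r (duhamelSource (h + 2 + 2 * δ) h L τ) ≤
        C * L ^ (-δ) * (cosh r ^ (-(1 / 2) : ℝ) * jap (t - r) ^ (-h)) := by
  obtain ⟨C, hC, hW⟩ := exists_enorm_Wker_duhamelSource_le (zero_le_one.trans hh.le) hδ.le
  obtain ⟨K, hK, hchar⟩ := exists_lintegral_characteristic_le hh hδ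
  refine ⟨C * K, fun L t r hL ht hr => ?_⟩
  have hL0 : 0 ≤ L := zero_le_one.trans hL
  have hjap := jap_rpow_nonneg (t - r) (-h)
  refine (le_abs_self _).trans <| (ENNReal.ofReal_le_ofReal_iff (by positivity)).1 ?_
  rw [← norm_eq_abs, ofReal_norm]
  set c := C * L ^ (-δ) * cosh r ^ (-(1 / 2) : ℝ)
  have hc : 0 ≤ c := by positivity
  calc ‖∫ τ in (0 : ℝ)..t, Wker (t - τ) r (duhamelSource (h + 2 + 2 * δ) h L τ)‖ₑ
      ≤ ∫⁻ τ in Ioc 0 t, ‖Wker (t - τ) r (duhamelSource (h + 2 + 2 * δ) h L τ)‖ₑ :=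
        enorm_intervalIntegral_le_lintegral_enorm ht _
    _ ≤ ∫⁻ τ in Ioc 0 t, ENNReal.ofReal c * ∫⁻ l,
          ENNReal.ofReal (jap (τ - l) ^ (-h) * jap (t - r - (τ - l)) ^ (-h)) *
            ENNReal.ofReal (coneProfile δ ((t - r - τ - l) / 2)) :=
        setLIntegral_mono' measurableSet_Ioc fun τ hτ => hW L r t τ hL hr hτ.2
    _ ≤ ENNReal.ofReal c * ENNReal.ofReal (K * jap (t - r) ^ (-h)) := by
        refine (setLIntegral_le_lintegral _ _).trans ?_
        rw [lintegral_const_mul' _ _ ENNReal.ofReal_ne_top]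
        gcongr
        exact hchar (t - r)
    _ = _ := by
        rw [← ENNReal.ofReal_mul hc]
        congr 1
        ring

theorem key_nonlinear_estimate (p h : ℝ) (hp : 3 < p) (hh1 : 1 < h) (hh2 : h < p - 2) :
    ∀ c : ℝ, 0 < c → ∃ L₀ : ℝ, 1 ≤ L₀ ∧ ∀ L : ℝ, L₀ ≤ L →
      ∀ t : ℝ, 0 ≤ t → ∀ r : ℝ, 0 < r →
        (∫ τ in (0 : ℝ)..t,
          Wker (t - τ) r (fun l =>
            (L + l) ^ (1 - p) * jap (τ - l) ^ (-h) * Real.sinh l *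
              Real.cosh l ^ (-(1 / 2) : ℝ)))
        ≤ c * Real.cosh r ^ (-(1 / 2) : ℝ) * jap (t - r) ^ (-h) := by
  intro c hc
  obtain ⟨δ, hδ, rfl⟩ : ∃ δ > 0, p = h + 2 + 2 * δ := ⟨(p - 2 - h) / 2, by linarith, by ring⟩
  obtain ⟨C, hC⟩ := exists_integral_Wker_duhamelSource_le hh1 hδ
  have hlim : Filter.Tendsto (fun L : ℝ => C * L ^ (-δ)) Filter.atTop (nhds 0) := by
    simpa only [mul_zero] using (tendsto_rpow_neg_atTop hδ).const_mul C
  obtain ⟨L₁, hL₁⟩ := Filter.eventually_atTop.1 (hlim.eventually_le_const hc)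
  refine ⟨max 1 L₁, le_max_left _ _, fun L hL t ht r hr => ?_⟩
  have hjap := jap_rpow_nonneg (t - r) (-h)
  calc _ ≤ C * L ^ (-δ) * (cosh r ^ (-(1 / 2) : ℝ) * jap (t - r) ^ (-h)) :=
        hC L t r ((le_max_left _ _).trans hL) ht hr.le
    _ ≤ c * (cosh r ^ (-(1 / 2) : ℝ) * jap (t - r) ^ (-h)) := by
        gcongr
        exact hL₁ L ((le_max_right _ _).trans hL)
    _ = _ := (mul_assoc _ _ _).symm
end

section
/- Let p > 3 and h > 1. There exists a constant C > 0, depending only on p and h, such that for all L ≥ 1 and all 0 ≤ t ≤ r: ∫_0^t ∫_{r−(t−τ)}^{r+(t−τ)} (L+λ)^{1−p} ⟨τ−λ⟩^{−h} dλ dτ ≤ C (L + r − t)^{2−p}. -/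
open MeasureTheory intervalIntegral

/-!
The weight `(L + l) ^ (1 - p)` is decreasing and `l ≥ r - t + τ` on the slice at height `τ`, so the
slice contributes at most `(L + r - t + τ) ^ (1 - p)` times the `L¹` norm of `⟨·⟩ ^ (-h)`, which is
finite because `h > 1`. Integrating over `τ` leaves at most
`∫ x in (L + r - t)..∞, x ^ (1 - p) = (L + r - t) ^ (2 - p) / (p - 2)`.
-/

lemma jap_rpow_pos (s x : ℝ) : 0 < jap x ^ s :=
  Real.rpow_pos_of_pos (Real.sqrt_pos.2 (by positivity)) s

lemma integrable_jap_rpow_neg {h : ℝ} (hh : 1 < h) : Integrable fun x ↦ jap x ^ (-h) := by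
  have hint : Integrable fun x : ℝ ↦ (1 + ‖x‖ ^ 2) ^ (-h / 2) :=
    integrable_rpow_neg_one_add_norm_sq (by simpa using hh)
  refine hint.congr (.of_forall fun x ↦ ?_)
  simp only [jap, Real.sqrt_eq_rpow, Real.norm_eq_abs, sq_abs]
  rw [← Real.rpow_mul (by positivity)]
  ring_nf

lemma integral_jap_rpow_neg_pos {h : ℝ} (hh : 1 < h) : 0 < ∫ x, jap x ^ (-h) := by
  rw [integral_pos_iff_support_of_nonneg (fun x ↦ (jap_rpow_pos (-h) x).le)
    (integrable_jap_rpow_neg hh),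
    Set.eq_univ_of_forall fun x ↦ Function.mem_support.2 (jap_rpow_pos (-h) x).ne']
  simp

lemma integral_rpow_le_of_lt {q a b : ℝ} (hq : q < -1) (ha : 0 < a) (hab : a ≤ b) :
    ∫ x in a..b, x ^ q ≤ -a ^ (q + 1) / (q + 1) := by
  rw [integral_of_le hab, ← integral_Ioi_rpow_of_lt hq ha]
  refine setIntegral_mono_set (integrableOn_Ioi_rpow_of_lt hq ha) ?_
    Set.Ioc_subset_Ioi_self.eventuallyLE
  filter_upwards [ae_restrict_mem measurableSet_Ioi] with x hx
  exact Real.rpow_nonneg (ha.trans hx).le q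

lemma antitoneOn_add_rpow {L q a : ℝ} (hq : q ≤ 0) (ha : 0 < L + a) :
    AntitoneOn (fun x ↦ (L + x) ^ q) (Set.Ici a) := fun _ hx _ _ hxy ↦
  Real.rpow_le_rpow_of_nonpos (ha.trans_le (add_le_add_right hx L)) (add_le_add_right hxy L) hq

section AntitoneWeight

variable {w g : ℝ → ℝ}

lemma integral_mul_le_of_antitoneOn {μ : Measure ℝ} {a b : ℝ} (hab : a ≤ b)
    (hw : AntitoneOn w (Set.Icc a b)) (hwb : 0 ≤ w b) (hg₀ : 0 ≤ g) (hg : Integrable g μ) :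
    ∫ x in a..b, w x * g x ∂μ ≤ w a * ∫ x, g x ∂μ := by
  have hb : b ∈ Set.Icc a b := Set.right_mem_Icc.2 hab
  have hwa : 0 ≤ w a := hwb.trans (hw (Set.left_mem_Icc.2 hab) hb hab)
  calc ∫ x in a..b, w x * g x ∂μ
      = ∫ x in Set.Ioc a b, w x * g x ∂μ := integral_of_le hab
    _ ≤ ∫ x in Set.Ioc a b, w a * g x ∂μ := by
        refine integral_mono_of_nonneg ?_ (hg.const_mul _).integrableOn ?_ <;>
          filter_upwards [ae_restrict_mem measurableSet_Ioc] with x hx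
        · exact mul_nonneg (hwb.trans (hw (Set.Ioc_subset_Icc_self hx) hb hx.2)) (hg₀ x)
        · exact mul_le_mul_of_nonneg_right
            (hw (Set.left_mem_Icc.2 hab) (Set.Ioc_subset_Icc_self hx) hx.1.le) (hg₀ x)
    _ ≤ ∫ x, w a * g x ∂μ :=
        setIntegral_le_integral (hg.const_mul _) (.of_forall fun x ↦ mul_nonneg hwa (hg₀ x))
    _ = w a * ∫ x, g x ∂μ := MeasureTheory.integral_const_mul _ _

lemma integral_triangle_mul_comp_sub_le_of_antitoneOn {t r : ℝ} (ht : 0 ≤ t)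
    (hw : AntitoneOn w (Set.Icc (r - t) (r + t))) (hwrt : 0 ≤ w (r + t))
    (hg₀ : 0 ≤ g) (hg : Integrable g) :
    ∫ τ in (0 : ℝ)..t, ∫ l in (r - (t - τ))..(r + (t - τ)), w l * g (τ - l)
      ≤ (∫ l in (r - t)..r, w l) * ∫ x, g x := by
  have hw₀ {l : ℝ} (hl : l ∈ Set.Icc (r - t) (r + t)) : 0 ≤ w l :=
    hwrt.trans (hw hl (Set.right_mem_Icc.2 (by linarith)) hl.2)
  have slice_subset {τ : ℝ} (hτ : τ ∈ Set.Ioc 0 t) :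
      Set.Icc (r - (t - τ)) (r + (t - τ)) ⊆ Set.Icc (r - t) (r + t) :=
    Set.Icc_subset_Icc (by linarith [hτ.1]) (by linarith [hτ.1])
  have slice_le {τ : ℝ} (hτ : τ ∈ Set.Ioc 0 t) : r - (t - τ) ≤ r + (t - τ) := by
    linarith [hτ.2]
  have hw_int : IntervalIntegrable w volume (r - t) r := by
    refine AntitoneOn.intervalIntegrable (hw.mono ?_)
    rw [Set.uIcc_of_le (by linarith)]
    exact Set.Icc_subset_Icc_right (by linarith)
  have hw_shift : IntervalIntegrable (fun τ ↦ w (r - (t - τ))) volume 0 t := by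
    convert hw_int.comp_add_left (r - t) using 2 <;> ring_nf
  calc ∫ τ in (0 : ℝ)..t, ∫ l in (r - (t - τ))..(r + (t - τ)), w l * g (τ - l)
      ≤ ∫ τ in (0 : ℝ)..t, w (r - (t - τ)) * ∫ x, g x := by
        rw [integral_of_le ht, integral_of_le ht]
        refine integral_mono_of_nonneg ?_ (hw_shift.mul_const _).1 ?_ <;>
          filter_upwards [ae_restrict_mem measurableSet_Ioc] with τ hτ
        · exact integral_nonneg (slice_le hτ) fun l hl ↦
            mul_nonneg (hw₀ (slice_subset hτ hl)) (hg₀ _)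
        · rw [← integral_sub_left_eq_self g volume τ]
          exact integral_mul_le_of_antitoneOn (slice_le hτ) (hw.mono (slice_subset hτ))
            (hw₀ (slice_subset hτ (Set.right_mem_Icc.2 (slice_le hτ)))) (fun l ↦ hg₀ (τ - l))
            (hg.comp_sub_left τ)
    _ = (∫ τ in (0 : ℝ)..t, w (r - (t - τ))) * ∫ x, g x := integral_mul_const _ _
    _ = (∫ l in (r - t)..r, w l) * ∫ x, g x := by
        simp only [← sub_add, integral_comp_add_left, add_zero, sub_add_cancel]

end AntitoneWeight

theorem exterior_region_estimate_general {p L t r : ℝ} {g : ℝ → ℝ} (hp : 2 < p) (ht : 0 ≤ t)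
    (hLrt : 0 < L + r - t) (hg₀ : 0 ≤ g) (hg : Integrable g) :
    ∫ τ in (0 : ℝ)..t, ∫ l in (r - (t - τ))..(r + (t - τ)), (L + l) ^ (1 - p) * g (τ - l)
      ≤ (∫ x, g x) / (p - 2) * (L + r - t) ^ (2 - p) := by
  have hLrt' : 0 < L + (r - t) := by rwa [← add_sub_assoc]
  have hweight : ∫ l in (r - t)..r, (L + l) ^ (1 - p) ≤ (L + r - t) ^ (2 - p) / (p - 2) := by
    rw [integral_comp_add_left (fun x ↦ x ^ (1 - p)) L, ← add_sub_assoc]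
    refine (integral_rpow_le_of_lt (by linarith) hLrt (by linarith)).trans_eq ?_
    rw [show 1 - p + 1 = 2 - p by ring, neg_div, ← div_neg, neg_sub]
  calc ∫ τ in (0 : ℝ)..t, ∫ l in (r - (t - τ))..(r + (t - τ)), (L + l) ^ (1 - p) * g (τ - l)
      ≤ (∫ l in (r - t)..r, (L + l) ^ (1 - p)) * ∫ x, g x :=
        integral_triangle_mul_comp_sub_le_of_antitoneOn ht
          ((antitoneOn_add_rpow (by linarith) hLrt').mono Set.Icc_subset_Ici_self)
          (Real.rpow_nonneg (by linarith) _) hg₀ hg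
    _ ≤ (L + r - t) ^ (2 - p) / (p - 2) * ∫ x, g x :=
        mul_le_mul_of_nonneg_right hweight (MeasureTheory.integral_nonneg hg₀)
    _ = (∫ x, g x) / (p - 2) * (L + r - t) ^ (2 - p) := by ring

theorem exterior_region_estimate (p h : ℝ) (hp : 3 < p) (hh : 1 < h) :
    ∃ C : ℝ, 0 < C ∧ ∀ L : ℝ, 1 ≤ L → ∀ t r : ℝ, 0 ≤ t → t ≤ r →
      (∫ τ in (0 : ℝ)..t, ∫ l in (r - (t - τ))..(r + (t - τ)),
        (L + l) ^ (1 - p) * jap (τ - l) ^ (-h))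
      ≤ C * (L + r - t) ^ (2 - p) :=
  ⟨(∫ x, jap x ^ (-h)) / (p - 2), div_pos (integral_jap_rpow_neg_pos hh) (by linarith),
    fun _ _ _ _ ht htr ↦ exterior_region_estimate_general (by linarith) ht (by linarith)
      (fun x ↦ (jap_rpow_pos (-h) x).le) (integrable_jap_rpow_neg hh)⟩
end

section
/- Let q > 1, 0 < c ≤ 4 and D₀ > 0, and let (D_m)_{m≥0} be a sequence of positive reals satisfying D_{m+1} ≥ c D_m^q / (4 (m+1)² q^{2m}) for all m ≥ 0. Then the series Σ_{j=0}^{∞} (2 ln(j+1) + 2j ln q − ln(c/4)) / q^{j+1} converges, and with E = ln D₀ − Σ_{j=0}^{∞} (2 ln(j+1) + 2j ln q − ln(c/4)) / q^{j+1}, one has D_m ≥ exp(E q^m) for every m ≥ 0. -/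
/-!
Passing to `L m = log (D m)` turns the recursion into the affine one `L (m + 1) ≥ q * L m - a m`,
where `a m` grows only linearly in `m`. Iterating, the losses `a j`, each discounted by
`q ^ (j + 1)`, have a finite sum, so `L m` is at least `q ^ m` times a fixed number. The losses
are nonnegative because `c / 4 ≤ 1`, and so their partial sums are bounded by the whole series.
-/

open Asymptotics Filter

lemma sub_sum_mul_pow_le_of_affine_recursion {K : Type*} [Field K] [LinearOrder K]
    [IsStrictOrderedRing K] {q : K} (hq : 0 < q) {L a : ℕ → K}
    (hL : ∀ m, q * L m - a m ≤ L (m + 1)) (m : ℕ) :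
    (L 0 - ∑ j ∈ Finset.range m, a j / q ^ (j + 1)) * q ^ m ≤ L m := by
  have hgronwall : -L m ≤ -L 0 * q ^ m + ∑ j ∈ Finset.range m, a j * q ^ (m - (j + 1)) := by
    have hneg : ∀ n ≥ 0, -L (n + 1) ≤ q * -L n + a n := fun n _ => by linarith [hL n]
    simpa using
      discrete_gronwall_prod_general (u := fun n => -L n) hneg (fun _ _ => hq.le) m.zero_le
  have hdiscount : ∑ j ∈ Finset.range m, a j * q ^ (m - (j + 1)) =
      (∑ j ∈ Finset.range m, a j / q ^ (j + 1)) * q ^ m := by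
    rw [Finset.sum_mul]
    refine Finset.sum_congr rfl fun j hj => ?_
    rw [pow_sub₀ q hq.ne' (Nat.succ_le_of_lt (Finset.mem_range.mp hj)), ← div_eq_mul_inv,
      mul_div_assoc', div_mul_eq_mul_div]
  rw [hdiscount] at hgronwall
  calc (L 0 - ∑ j ∈ Finset.range m, a j / q ^ (j + 1)) * q ^ m
      = -(-L 0 * q ^ m + (∑ j ∈ Finset.range m, a j / q ^ (j + 1)) * q ^ m) := by ring
    _ ≤ L m := neg_le.mp hgronwall

lemma sub_tsum_mul_pow_le_of_affine_recursion {q : ℝ} (hq : 0 < q) {L a : ℕ → ℝ}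
    (ha : ∀ m, 0 ≤ a m) (hs : Summable fun j => a j / q ^ (j + 1))
    (hL : ∀ m, q * L m - a m ≤ L (m + 1)) (m : ℕ) :
    (L 0 - ∑' j, a j / q ^ (j + 1)) * q ^ m ≤ L m := by
  have hpartial : ∑ j ∈ Finset.range m, a j / q ^ (j + 1) ≤ ∑' j, a j / q ^ (j + 1) :=
    hs.sum_le_tsum _ fun j _ => div_nonneg (ha j) (by positivity)
  calc (L 0 - ∑' j, a j / q ^ (j + 1)) * q ^ m
      ≤ (L 0 - ∑ j ∈ Finset.range m, a j / q ^ (j + 1)) * q ^ m := by gcongr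
    _ ≤ L m := sub_sum_mul_pow_le_of_affine_recursion hq hL m

lemma exp_mul_pow_le_of_rpow_recursion {q : ℝ} (hq : 0 < q) {D a : ℕ → ℝ}
    (hD : ∀ m, 0 < D m) (ha : ∀ m, 0 ≤ a m) (hs : Summable fun j => a j / q ^ (j + 1))
    (hrec : ∀ m, Real.exp (-a m) * D m ^ q ≤ D (m + 1)) (m : ℕ) :
    Real.exp ((Real.log (D 0) - ∑' j, a j / q ^ (j + 1)) * q ^ m) ≤ D m := by
  have hlog (n : ℕ) : q * Real.log (D n) - a n ≤ Real.log (D (n + 1)) := by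
    have hpow : 0 < D n ^ q := Real.rpow_pos_of_pos (hD n) q
    calc q * Real.log (D n) - a n = Real.log (Real.exp (-a n) * D n ^ q) := by
          rw [Real.log_mul (Real.exp_ne_zero _) hpow.ne', Real.log_exp, Real.log_rpow (hD n)]
          ring
      _ ≤ Real.log (D (n + 1)) := Real.log_le_log (by positivity) (hrec n)
  rw [← Real.le_log_iff_exp_le (hD m)]
  exact sub_tsum_mul_pow_le_of_affine_recursion (L := fun n => Real.log (D n)) hq ha hs hlog m

lemma summable_div_pow_succ_of_isBigO {𝕜 : Type*} [NormedField 𝕜] [CompleteSpace 𝕜] {q : 𝕜}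
    (hq : 1 < ‖q‖) {k : ℕ} {u : ℕ → 𝕜} (hu : u =O[atTop] fun n => ((n ^ k : ℕ) : 𝕜)) :
    Summable fun n => u n / q ^ (n + 1) := by
  have hr : ‖q⁻¹‖ < 1 := by
    rw [norm_inv]
    exact inv_lt_one_of_one_lt₀ hq
  refine ((summable_norm_mul_geometric_of_norm_lt_one' hr hu).of_norm.mul_right q⁻¹).congr
    fun n => ?_
  rw [mul_assoc, ← pow_succ, inv_pow, div_eq_mul_inv]

/-- Minus the logarithm of the coefficient `c / (4 (j + 1)² q ^ (2 j))` of `D j ^ q` in John's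
recursion: the amount lost at step `j` when the recursion is written for `log (D j)`. -/
noncomputable def logLoss (q c : ℝ) (j : ℕ) : ℝ :=
  2 * Real.log ((j : ℝ) + 1) + 2 * (j : ℝ) * Real.log q - Real.log (c / 4)

lemma exp_neg_logLoss {q c : ℝ} (hq : 0 < q) (hc : 0 < c) (j : ℕ) :
    Real.exp (-logLoss q c j) = c / (4 * ((j : ℝ) + 1) ^ 2 * q ^ (2 * j)) := by
  have hlog : -logLoss q c j = Real.log (c / 4 / (((j : ℝ) + 1) ^ 2 * q ^ (2 * j))) := by
    rw [Real.log_div (by positivity) (by positivity), Real.log_mul (by positivity) (by positivity),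
      Real.log_pow, Real.log_pow, logLoss]
    push_cast
    ring
  rw [hlog, Real.exp_log (by positivity), div_div, mul_assoc]

lemma logLoss_nonneg {q c : ℝ} (hq : 1 ≤ q) (hc0 : 0 ≤ c) (hc4 : c ≤ 4) (j : ℕ) :
    0 ≤ logLoss q c j := by
  have hindex : 0 ≤ Real.log ((j : ℝ) + 1) :=
    Real.log_nonneg (le_add_of_nonneg_left j.cast_nonneg)
  have hgrowth : 0 ≤ 2 * (j : ℝ) * Real.log q := mul_nonneg (by positivity) (Real.log_nonneg hq)
  have hcoeff : Real.log (c / 4) ≤ 0 := Real.log_nonpos (by positivity) (by linarith)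
  rw [logLoss]
  linarith

lemma logLoss_isBigO (q c : ℝ) : logLoss q c =O[atTop] fun j : ℕ => (j : ℝ) := by
  have hindex : (fun j : ℕ => Real.log ((j : ℝ) + 1)) =O[atTop] fun j : ℕ => (j : ℝ) := by
    refine isBigO_of_le _ fun j => ?_
    rw [Real.norm_of_nonneg (Real.log_nonneg (le_add_of_nonneg_left j.cast_nonneg)),
      Real.norm_of_nonneg j.cast_nonneg]
    linarith [Real.log_le_sub_one_of_pos (Nat.cast_add_one_pos (α := ℝ) j)]
  have hgrowth : (fun j : ℕ => 2 * (j : ℝ) * Real.log q) =O[atTop] fun j : ℕ => (j : ℝ) :=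
    ((isBigO_refl _ _).const_mul_left (2 * Real.log q)).congr_left fun j => by ring
  have hcoeff : (fun _ : ℕ => Real.log (c / 4)) =O[atTop] fun j : ℕ => (j : ℝ) :=
    (isLittleO_const_id_atTop (Real.log (c / 4))).natCast_atTop.isBigO
  exact ((hindex.const_mul_left 2).add hgrowth).sub hcoeff

lemma summable_logLoss_div_pow {q : ℝ} (hq : 1 < q) (c : ℝ) :
    Summable fun j => logLoss q c j / q ^ (j + 1) :=
  summable_div_pow_succ_of_isBigO (k := 1) (hq.trans_le (Real.le_norm_self q))
    (by simpa using logLoss_isBigO q c)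

theorem john_iteration_lemma (q c : ℝ) (hq : 1 < q) (hc0 : 0 < c) (hc4 : c ≤ 4)
    (D : ℕ → ℝ) (hDpos : ∀ m, 0 < D m)
    (hrec : ∀ m : ℕ, D (m + 1) ≥ c * D m ^ q / (4 * ((m : ℝ) + 1) ^ 2 * q ^ (2 * m))) :
    Summable (fun j : ℕ =>
      (2 * Real.log ((j : ℝ) + 1) + 2 * (j : ℝ) * Real.log q - Real.log (c / 4))
        / q ^ (j + 1)) ∧
    ∀ m : ℕ, D m ≥ Real.exp
      ((Real.log (D 0) - ∑' j : ℕ,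
          (2 * Real.log ((j : ℝ) + 1) + 2 * (j : ℝ) * Real.log q - Real.log (c / 4))
            / q ^ (j + 1)) * q ^ m) := by
  have hq0 : 0 < q := one_pos.trans hq
  have hloss (m : ℕ) : Real.exp (-logLoss q c m) * D m ^ q ≤ D (m + 1) := by
    rw [exp_neg_logLoss hq0 hc0, div_mul_eq_mul_div]
    exact hrec m
  have hsum : Summable fun j => logLoss q c j / q ^ (j + 1) := summable_logLoss_div_pow hq c
  exact ⟨hsum, exp_mul_pow_le_of_rpow_recursion hq0 hDpos (logLoss_nonneg hq.le hc0.le hc4)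
    hsum hloss⟩
end

section
/- For every τ₀ > 0 there exists a constant c₀ > 0 such that for every continuous nonnegative function u₁ : [0,∞) → ℝ with u₁(λ) ≥ 1 for all λ ∈ [τ₀, 3τ₀], and for all t, r > 0 with τ₀ < t − r < 2τ₀ and t + r > 3τ₀: I(t,r,u₁) ≥ c₀ (sinh r)^{−1/2}. -/
open MeasureTheory intervalIntegral

/-- The radial form, at geodesic radius `r` and time `t`, of the solution of the shifted
wave equation on the hyperbolic plane with data `u(0) = 0`, `∂ₜu(0) = φ`. -/
noncomputable def Isol (t r : ℝ) (φ : ℝ → ℝ) : ℝ :=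
  (1 / (Real.pi * Real.sqrt 2)) *
    ∫ s in (0 : ℝ)..t, ∫ l in |r - s|..(r + s),
      φ l * Real.sinh l * Real.sinh s *
        ((Real.cosh t - Real.cosh s) * (Real.cosh (r + s) - Real.cosh l) *
          (Real.cosh l - Real.cosh (r - s))) ^ (-(1 / 2) : ℝ)

/-!
The kernel of `Isol` is nonnegative, so restricting the double integral to a small rectangle bounds
it from below. Take `l ∈ [a, a + ρ]` and `s ∈ [r + a - 2ρ, r + a - ρ]`. This rectangle lies in the
domain of integration, and bounding each hyperbolic cosine by an exponential shows that the kernel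
is at least `sinh a * sinh r * exp (-(t / 2 + r + a))` there; for `r` bounded away from `0` this
is comparable to `exp (-(t - r) / 2) * sinh r ^ (-1 / 2)`.

Discarding the rest of the domain requires the integrals to converge. The inner one is an arcsine
integral in the variable `cosh l`: with `φ = 1` it equals `π` times the derivative in `s` of
`-2 * √(cosh t - cosh s)`.
-/

open Real Set

lemma rpow_neg_half_eq_inv_sqrt {x : ℝ} (hx : 0 ≤ x) : x ^ (-(1 / 2) : ℝ) = (√x)⁻¹ := by
  rw [rpow_neg hx, sqrt_eq_rpow]

section SqrtSingularities

variable {a b : ℝ} {f f' : ℝ → ℝ}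

lemma hasDerivAt_arcsin_affine {x : ℝ} (hx : x ∈ Ioo a b) :
    HasDerivAt (fun y => arcsin ((2 * y - a - b) / (b - a)))
      (((b - x) * (x - a)) ^ (-(1 / 2) : ℝ)) x := by
  have hxa : 0 < x - a := sub_pos.2 hx.1
  have hbx : 0 < b - x := sub_pos.2 hx.2
  have hba : 0 < b - a := by linarith
  have hne_neg_one : (2 * x - a - b) / (b - a) ≠ -1 := by
    rw [Ne, div_eq_iff hba.ne']; intro h; linarith
  have hne_one : (2 * x - a - b) / (b - a) ≠ 1 := by
    rw [Ne, div_eq_iff hba.ne']; intro h; linarith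
  have haffine : HasDerivAt (fun y => (2 * y - a - b) / (b - a)) (2 * 1 / (b - a)) x :=
    ((((hasDerivAt_id x).const_mul 2).sub_const a).sub_const b).div_const (b - a)
  have hsqrt : √(1 - ((2 * x - a - b) / (b - a)) ^ 2) =
      2 / (b - a) * √((b - x) * (x - a)) := by
    have hsq : 1 - ((2 * x - a - b) / (b - a)) ^ 2 =
        (2 / (b - a)) ^ 2 * ((b - x) * (x - a)) := by
      field_simp
      ring
    rw [hsq, sqrt_mul (sq_nonneg _), sqrt_sq (by positivity)]
  refine ((hasDerivAt_arcsin hne_neg_one hne_one).comp x haffine).congr_deriv ?_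
  rw [hsqrt, rpow_neg_half_eq_inv_sqrt (by positivity)]
  field_simp

lemma mem_Ioo_image_of_hasDerivAt_pos (hf : ContinuousOn f (Icc a b))
    (hderiv : ∀ x ∈ Ioo a b, HasDerivAt f (f' x) x) (hpos : ∀ x ∈ Ioo a b, 0 < f' x)
    {x : ℝ} (hx : x ∈ Ioo a b) : f x ∈ Ioo (f a) (f b) := by
  have hmono : StrictMonoOn f (Icc a b) :=
    strictMonoOn_of_hasDerivWithinAt_pos (convex_Icc a b) hf
      (by simpa only [interior_Icc] using fun x hx => (hderiv x hx).hasDerivWithinAt)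
      (by simpa only [interior_Icc] using hpos)
  have hab : a ≤ b := (hx.1.trans hx.2).le
  exact ⟨hmono (left_mem_Icc.2 hab) (Ioo_subset_Icc_self hx) hx.1,
    hmono (Ioo_subset_Icc_self hx) (right_mem_Icc.2 hab) hx.2⟩

lemma intervalIntegrable_deriv_mul_sub_rpow_neg_half (hab : a ≤ b) (hf : ContinuousOn f (Icc a b))
    (hderiv : ∀ x ∈ Ioo a b, HasDerivAt f (f' x) x) (hpos : ∀ x ∈ Ioo a b, 0 < f' x) :
    IntervalIntegrable (fun x => f' x * (f b - f x) ^ (-(1 / 2) : ℝ)) volume a b := by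
  have hgap : ∀ x ∈ Ioo a b, 0 < f b - f x := fun x hx =>
    sub_pos.2 (mem_Ioo_image_of_hasDerivAt_pos hf hderiv hpos hx).2
  refine (intervalIntegrable_iff_integrableOn_Ioc_of_le hab).2 <|
    integrableOn_deriv_of_nonneg (g := fun x => -2 * √(f b - f x)) (by fun_prop)
      (fun x hx => ?_) fun x hx => mul_nonneg (hpos x hx).le (rpow_nonneg (hgap x hx).le _)
  refine ((((hderiv x hx).const_sub (f b)).sqrt (hgap x hx).ne').const_mul (-2)).congr_deriv ?_
  rw [rpow_neg_half_eq_inv_sqrt (hgap x hx).le]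
  ring

lemma hasDerivAt_arcsin_affine_comp (hf : ContinuousOn f (Icc a b))
    (hderiv : ∀ x ∈ Ioo a b, HasDerivAt f (f' x) x) (hpos : ∀ x ∈ Ioo a b, 0 < f' x)
    {x : ℝ} (hx : x ∈ Ioo a b) :
    HasDerivAt (fun y => arcsin ((2 * f y - f a - f b) / (f b - f a)))
      (f' x * ((f b - f x) * (f x - f a)) ^ (-(1 / 2) : ℝ)) x :=
  ((hasDerivAt_arcsin_affine (mem_Ioo_image_of_hasDerivAt_pos hf hderiv hpos hx)).comp x
    (hderiv x hx)).congr_deriv (mul_comm _ _)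

lemma intervalIntegrable_deriv_mul_arcsine_density (hab : a ≤ b) (hf : ContinuousOn f (Icc a b))
    (hderiv : ∀ x ∈ Ioo a b, HasDerivAt f (f' x) x) (hpos : ∀ x ∈ Ioo a b, 0 < f' x) :
    IntervalIntegrable (fun x => f' x * ((f b - f x) * (f x - f a)) ^ (-(1 / 2) : ℝ))
      volume a b := by
  refine (intervalIntegrable_iff_integrableOn_Ioc_of_le hab).2 <| integrableOn_deriv_of_nonneg
    (by fun_prop) (fun x hx => hasDerivAt_arcsin_affine_comp hf hderiv hpos hx) fun x hx => ?_
  obtain ⟨hax, hxb⟩ := mem_Ioo_image_of_hasDerivAt_pos hf hderiv hpos hx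
  exact mul_nonneg (hpos x hx).le
    (rpow_nonneg (mul_nonneg (sub_pos.2 hxb).le (sub_pos.2 hax).le) _)

lemma integral_deriv_mul_arcsine_density (hab : a < b) (hf : ContinuousOn f (Icc a b))
    (hderiv : ∀ x ∈ Ioo a b, HasDerivAt f (f' x) x) (hpos : ∀ x ∈ Ioo a b, 0 < f' x) :
    ∫ x in a..b, f' x * ((f b - f x) * (f x - f a)) ^ (-(1 / 2) : ℝ) = π := by
  obtain ⟨x, hx⟩ := nonempty_Ioo.2 hab
  obtain ⟨hax, hxb⟩ := mem_Ioo_image_of_hasDerivAt_pos hf hderiv hpos hx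
  have hgap : f b - f a ≠ 0 := (sub_pos.2 (hax.trans hxb)).ne'
  have hright : (2 * f b - f a - f b) / (f b - f a) = 1 := by
    rw [div_eq_iff hgap]; ring
  have hleft : (2 * f a - f a - f b) / (f b - f a) = -1 := by
    rw [div_eq_iff hgap]; ring
  rw [integral_eq_sub_of_hasDerivAt_of_le hab.le (by fun_prop)
    (fun x hx => hasDerivAt_arcsin_affine_comp hf hderiv hpos hx)
    (intervalIntegrable_deriv_mul_arcsine_density hab.le hf hderiv hpos),
    hright, hleft, arcsin_one, arcsin_neg_one]
  ring

end SqrtSingularities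

lemma aestronglyMeasurable_intervalIntegral {α : Type*} [MeasurableSpace α] {μ : Measure α}
    [SFinite μ] {ν : Measure ℝ} [SFinite ν] {a b : α → ℝ} {F : α → ℝ → ℝ} (ha : Measurable a)
    (hb : Measurable b) (hF : AEStronglyMeasurable (Function.uncurry F) (μ.prod ν)) :
    AEStronglyMeasurable (fun x => ∫ y in a x..b x, F x y ∂ν) μ := by
  have integral_Ioc {c d : α → ℝ} (hc : Measurable c) (hd : Measurable d) :
      AEStronglyMeasurable (fun x => ∫ y in Ioc (c x) (d x), F x y ∂ν) μ := by
    have hS : MeasurableSet {p : α × ℝ | c p.1 < p.2 ∧ p.2 ≤ d p.1} :=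
      (measurableSet_lt (hc.comp measurable_fst) measurable_snd).inter
        (measurableSet_le measurable_snd (hd.comp measurable_fst))
    refine (hF.indicator hS).integral_prod_right'.congr (.of_forall fun x => ?_)
    exact MeasureTheory.integral_indicator (f := F x) (measurableSet_Ioc (a := c x) (b := d x))
  exact (integral_Ioc ha hb).sub (integral_Ioc hb ha)

lemma sub_mul_le_integral_of_le {f : ℝ → ℝ} {a b c d m : ℝ} (hca : c ≤ a) (hab : a ≤ b)
    (hbd : b ≤ d) (hf : ∀ x ∈ Ioc c d, 0 ≤ f x) (hfi : IntervalIntegrable f volume c d)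
    (hm : ∀ x ∈ Icc a b, m ≤ f x) : (b - a) * m ≤ ∫ x in c..d, f x := by
  have hsub : uIcc a b ⊆ uIcc c d := by
    rw [uIcc_of_le hab, uIcc_of_le (hca.trans (hab.trans hbd))]
    exact Icc_subset_Icc hca hbd
  calc (b - a) * m = ∫ _ in a..b, m := by simp
    _ ≤ ∫ x in a..b, f x := integral_mono_on hab intervalIntegrable_const (hfi.mono_set hsub) hm
    _ ≤ ∫ x in c..d, f x := integral_mono_interval hca hab hbd
      (by filter_upwards [ae_restrict_mem measurableSet_Ioc] with x hx using hf x hx) hfi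

lemma abs_sub_lt_add_of_pos {r s : ℝ} (hr : 0 < r) (hs : 0 < s) : |r - s| < r + s := by
  rw [abs_lt]; constructor <;> linarith

lemma cosh_le_exp_of_nonneg {x : ℝ} (hx : 0 ≤ x) : cosh x ≤ exp x := by
  linarith [sinh_nonneg_iff.2 hx, cosh_add_sinh x]

lemma cosh_sub_cosh_nonneg {x y : ℝ} (h : |x| ≤ y) : 0 ≤ cosh y - cosh x :=
  sub_nonneg.2 (cosh_le_cosh.2 (h.trans (le_abs_self y)))

lemma cosh_sub_cosh_pos {x y : ℝ} (h : |x| < y) : 0 < cosh y - cosh x :=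
  sub_pos.2 (cosh_lt_cosh.2 (h.trans_le (le_abs_self y)))

lemma cosh_sub_cosh_le_exp {x : ℝ} (hx : 0 ≤ x) (y : ℝ) : cosh x - cosh y ≤ exp x := by
  linarith [cosh_le_exp_of_nonneg hx, cosh_pos y]

lemma mul_exp_le_sinh {δ r : ℝ} (hr : δ ≤ r) :
    (1 - exp (-(2 * δ))) / 2 * exp r ≤ sinh r := by
  have h : exp (-r) ≤ exp (-(2 * δ)) * exp r := by
    rw [← exp_add, exp_le_exp]; linarith
  rw [sinh_eq]
  linarith

lemma mul_sinh_rpow_neg_half_le {δ r : ℝ} (hδ : 0 < δ) (hr : δ ≤ r) :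
    ((1 - exp (-(2 * δ))) / 2) ^ (3 / 2 : ℝ) * sinh r ^ (-(1 / 2) : ℝ) ≤
      sinh r * exp (-(3 / 2 * r)) := by
  have hk : 0 < (1 - exp (-(2 * δ))) / 2 :=
    half_pos (sub_pos.2 (exp_lt_one_iff.2 (by linarith)))
  have hgrowth := mul_exp_le_sinh hr
  set k := (1 - exp (-(2 * δ))) / 2
  have hsinh : 0 < sinh r := sinh_pos_iff.2 (hδ.trans_le hr)
  have hsplit : k ^ (3 / 2 : ℝ) = (k * exp r) ^ (3 / 2 : ℝ) * exp (-(3 / 2 * r)) := by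
    rw [mul_rpow hk.le (exp_pos r).le, ← exp_mul, mul_assoc, ← exp_add,
      show r * (3 / 2) + -(3 / 2 * r) = 0 by ring, exp_zero, mul_one]
  calc k ^ (3 / 2 : ℝ) * sinh r ^ (-(1 / 2) : ℝ)
      = (k * exp r) ^ (3 / 2 : ℝ) * sinh r ^ (-(1 / 2) : ℝ) * exp (-(3 / 2 * r)) := by
        rw [hsplit]; ring
    _ ≤ sinh r ^ (3 / 2 : ℝ) * sinh r ^ (-(1 / 2) : ℝ) * exp (-(3 / 2 * r)) := by gcongr
    _ = sinh r * exp (-(3 / 2 * r)) := by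
        rw [← rpow_add hsinh]; norm_num

/-- The kernel of the radial solution operator `Isol`, up to the factor `1 / (π * √2)`. It is
meaningful for `0 ≤ s < t` and `|r - s| < l < r + s`, where the three differences are positive. -/
noncomputable def radialKernel (t r s l : ℝ) : ℝ :=
  sinh l * sinh s *
    ((cosh t - cosh s) * (cosh (r + s) - cosh l) * (cosh l - cosh (r - s))) ^ (-(1 / 2) : ℝ)

lemma Isol_eq_integral_radialKernel (t r : ℝ) (φ : ℝ → ℝ) :
    Isol t r φ =
      1 / (π * √2) * ∫ s in (0 : ℝ)..t, ∫ l in |r - s|..(r + s), φ l * radialKernel t r s l := by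
  simp only [Isol, radialKernel, mul_assoc]

section RadialKernel

variable {t r s l : ℝ}

lemma radialKernel_eq_mul (hs : 0 ≤ s) (hst : s ≤ t) (hl : l ∈ Icc |r - s| (r + s)) :
    radialKernel t r s l =
      sinh s * (cosh t - cosh s) ^ (-(1 / 2) : ℝ) *
        (sinh l * ((cosh (r + s) - cosh l) * (cosh l - cosh |r - s|)) ^ (-(1 / 2) : ℝ)) := by
  have hl0 : 0 ≤ l := (abs_nonneg _).trans hl.1
  have ht : 0 ≤ cosh t - cosh s := cosh_sub_cosh_nonneg ((abs_of_nonneg hs).trans_le hst)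
  have hupper : 0 ≤ cosh (r + s) - cosh l :=
    cosh_sub_cosh_nonneg ((abs_of_nonneg hl0).trans_le hl.2)
  have hlower : 0 ≤ cosh l - cosh (r - s) := cosh_sub_cosh_nonneg hl.1
  rw [radialKernel, mul_assoc (cosh t - cosh s), mul_rpow ht (mul_nonneg hupper hlower), cosh_abs]
  ring

lemma radialKernel_nonneg (hs : 0 ≤ s) (hst : s ≤ t) (hl : l ∈ Icc |r - s| (r + s)) :
    0 ≤ radialKernel t r s l := by
  have hl0 : 0 ≤ l := (abs_nonneg _).trans hl.1
  have hproduct := mul_nonneg (mul_nonneg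
    (cosh_sub_cosh_nonneg ((abs_of_nonneg hs).trans_le hst))
    (cosh_sub_cosh_nonneg ((abs_of_nonneg hl0).trans_le hl.2))) (cosh_sub_cosh_nonneg hl.1)
  exact mul_nonneg (mul_nonneg (sinh_nonneg_iff.2 hl0) (sinh_nonneg_iff.2 hs))
    (rpow_nonneg hproduct _)

lemma measurable_uncurry_radialKernel (t r : ℝ) :
    Measurable (Function.uncurry (radialKernel t r)) := by
  unfold Function.uncurry radialKernel
  fun_prop

lemma intervalIntegrable_radialKernel (hr : 0 < r) (hs : 0 < s) (hst : s ≤ t) :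
    IntervalIntegrable (radialKernel t r s) volume |r - s| (r + s) := by
  have hlt := abs_sub_lt_add_of_pos hr hs
  refine ((intervalIntegrable_deriv_mul_arcsine_density hlt.le continuous_cosh.continuousOn
    (fun l _ => hasDerivAt_cosh l) fun l hl =>
      sinh_pos_iff.2 ((abs_nonneg _).trans_lt hl.1)).const_mul
        (sinh s * (cosh t - cosh s) ^ (-(1 / 2) : ℝ))).congr_uIoo ?_
  rw [uIoo_of_le hlt.le]
  exact fun l hl => (radialKernel_eq_mul hs.le hst (Ioo_subset_Icc_self hl)).symm

lemma integral_radialKernel (hr : 0 < r) (hs : 0 < s) (hst : s ≤ t) :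
    ∫ l in |r - s|..(r + s), radialKernel t r s l =
      π * (sinh s * (cosh t - cosh s) ^ (-(1 / 2) : ℝ)) := by
  have hlt := abs_sub_lt_add_of_pos hr hs
  rw [integral_congr_Ioo_of_le hlt.le fun l hl =>
      radialKernel_eq_mul hs.le hst (Ioo_subset_Icc_self hl),
    intervalIntegral.integral_const_mul, integral_deriv_mul_arcsine_density hlt
      continuous_cosh.continuousOn (fun l _ => hasDerivAt_cosh l) fun l hl =>
        sinh_pos_iff.2 ((abs_nonneg _).trans_lt hl.1), mul_comm]

lemma sinh_mul_sinh_mul_exp_le_radialKernel (hs : 0 ≤ s) (hst : s < t)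
    (hl : l ∈ Ioo |r - s| (r + s)) :
    sinh l * sinh s * exp (-((t + (r + s) + l) / 2)) ≤ radialKernel t r s l := by
  have hl0 : 0 ≤ l := (abs_nonneg _).trans hl.1.le
  have ht : 0 < cosh t - cosh s := cosh_sub_cosh_pos ((abs_of_nonneg hs).trans_lt hst)
  have hupper : 0 < cosh (r + s) - cosh l := cosh_sub_cosh_pos ((abs_of_nonneg hl0).trans_lt hl.2)
  have hlower : 0 < cosh l - cosh (r - s) := cosh_sub_cosh_pos hl.1
  have hprod : (cosh t - cosh s) * (cosh (r + s) - cosh l) * (cosh l - cosh (r - s)) ≤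
      exp (t + (r + s) + l) := by
    rw [exp_add, exp_add]
    gcongr
    exacts [cosh_sub_cosh_le_exp (hs.trans hst.le) s,
      cosh_sub_cosh_le_exp (hl0.trans hl.2.le) l, cosh_sub_cosh_le_exp hl0 _]
  have hexp : exp (-((t + (r + s) + l) / 2)) = exp (t + (r + s) + l) ^ (-(1 / 2) : ℝ) := by
    rw [← exp_mul]; ring_nf
  rw [radialKernel, hexp]
  exact mul_le_mul_of_nonneg_left
    (rpow_le_rpow_of_nonpos (mul_pos (mul_pos ht hupper) hlower) hprod (by norm_num))
    (mul_nonneg (sinh_nonneg_iff.2 hl0) (sinh_nonneg_iff.2 hs))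

lemma sinh_mul_sinh_mul_exp_le_radialKernel_of_mem_Icc {a ρ : ℝ} (hρ : 0 < ρ) (hρa : 2 * ρ ≤ a)
    (hρr : 2 * ρ ≤ r) (ht : a ≤ t - r) (hs : s ∈ Icc (r + a - 2 * ρ) (r + a - ρ))
    (hl : l ∈ Icc a (a + ρ)) :
    sinh a * sinh r * exp (-(t / 2 + r + a)) ≤ radialKernel t r s l := by
  obtain ⟨hs_ge, hs_le⟩ := hs
  obtain ⟨hl_ge, hl_le⟩ := hl
  have hdomain : l ∈ Ioo |r - s| (r + s) :=
    ⟨abs_lt.2 ⟨by linarith, by linarith⟩, by linarith⟩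
  have hsinh_r : 0 ≤ sinh r := sinh_nonneg_iff.2 (by linarith)
  have hsinh_s : 0 ≤ sinh s := sinh_nonneg_iff.2 (by linarith)
  have hsinh_l : 0 ≤ sinh l := sinh_nonneg_iff.2 (by linarith)
  calc sinh a * sinh r * exp (-(t / 2 + r + a))
      ≤ sinh l * sinh s * exp (-((t + (r + s) + l) / 2)) := by
        gcongr ?_ * ?_ * exp ?_
        · exact sinh_le_sinh.2 hl_ge
        · exact sinh_le_sinh.2 (by linarith)
        · linarith
    _ ≤ radialKernel t r s l :=
        sinh_mul_sinh_mul_exp_le_radialKernel (by linarith) (by linarith) hdomain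

end RadialKernel

section RadialSolution

variable {t r s M : ℝ} {φ : ℝ → ℝ}

lemma intervalIntegrable_mul_radialKernel
    (hφ_meas : AEStronglyMeasurable φ (volume.restrict (Ici 0)))
    (hφ_bdd : ∀ x ∈ Icc 0 (r + t), |φ x| ≤ M) (hr : 0 < r) (hs : 0 < s) (hst : s ≤ t) :
    IntervalIntegrable (fun l => φ l * radialKernel t r s l) volume |r - s| (r + s) := by
  have hle := (abs_sub_lt_add_of_pos hr hs).le
  rw [intervalIntegrable_iff_integrableOn_Ioc_of_le hle]
  refine Integrable.bdd_mul (c := M) (intervalIntegrable_radialKernel hr hs hst).1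
    (hφ_meas.mono_set fun l hl => (abs_nonneg _).trans hl.1.le) ?_
  filter_upwards [ae_restrict_mem measurableSet_Ioc] with l hl
  exact hφ_bdd l ⟨(abs_nonneg _).trans hl.1.le, hl.2.trans (by linarith)⟩

lemma abs_integral_mul_radialKernel_le
    (hφ_bdd : ∀ x ∈ Icc 0 (r + t), |φ x| ≤ M) (hr : 0 < r) (hs : 0 < s) (hst : s ≤ t) :
    |∫ l in |r - s|..(r + s), φ l * radialKernel t r s l| ≤
      M * π * (sinh s * (cosh t - cosh s) ^ (-(1 / 2) : ℝ)) := by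
  have hle := (abs_sub_lt_add_of_pos hr hs).le
  calc |∫ l in |r - s|..(r + s), φ l * radialKernel t r s l|
      ≤ ∫ l in |r - s|..(r + s), M * radialKernel t r s l := by
        rw [← norm_eq_abs]
        refine intervalIntegral.norm_integral_le_of_norm_le hle (.of_forall fun l hl => ?_)
          ((intervalIntegrable_radialKernel hr hs hst).const_mul M)
        have hkernel := radialKernel_nonneg hs.le hst (Ioc_subset_Icc_self hl)
        rw [norm_mul, norm_of_nonneg hkernel]
        exact mul_le_mul_of_nonneg_right
          (hφ_bdd l ⟨(abs_nonneg _).trans hl.1.le, hl.2.trans (by linarith)⟩) hkernel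
    _ = M * π * (sinh s * (cosh t - cosh s) ^ (-(1 / 2) : ℝ)) := by
        rw [intervalIntegral.integral_const_mul, integral_radialKernel hr hs hst, mul_assoc]

lemma aestronglyMeasurable_integral_mul_radialKernel
    (hφ_meas : AEStronglyMeasurable φ (volume.restrict (Ici 0))) (hr : 0 < r) :
    AEStronglyMeasurable (fun s => ∫ l in |r - s|..(r + s), φ l * radialKernel t r s l)
      (volume.restrict (Ioc 0 t)) := by
  have hintegrand : AEStronglyMeasurable (Function.uncurry fun s l => φ l * radialKernel t r s l)
      ((volume.restrict (Ioc 0 t)).prod (volume.restrict (Ici 0))) :=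
    hφ_meas.comp_snd.mul (measurable_uncurry_radialKernel t r).aestronglyMeasurable
  refine (aestronglyMeasurable_intervalIntegral (a := fun s => |r - s|) (b := fun s => r + s)
    (by fun_prop) (by fun_prop) hintegrand).congr ?_
  filter_upwards [ae_restrict_mem measurableSet_Ioc] with s hs
  have hle := (abs_sub_lt_add_of_pos hr hs.1).le
  have hsub : Ioc |r - s| (r + s) ⊆ Ici 0 := fun l hl => (abs_nonneg _).trans hl.1.le
  rw [integral_of_le hle, integral_of_le hle, Measure.restrict_restrict_of_subset hsub]

lemma intervalIntegrable_integral_mul_radialKernel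
    (hφ_meas : AEStronglyMeasurable φ (volume.restrict (Ici 0)))
    (hφ_bdd : ∀ x ∈ Icc 0 (r + t), |φ x| ≤ M) (ht : 0 ≤ t) (hr : 0 < r) :
    IntervalIntegrable (fun s => ∫ l in |r - s|..(r + s), φ l * radialKernel t r s l)
      volume 0 t := by
  refine ((intervalIntegrable_deriv_mul_sub_rpow_neg_half ht continuous_cosh.continuousOn
    (fun s _ => hasDerivAt_cosh s) fun s hs => sinh_pos_iff.2 hs.1).const_mul (M * π)).mono_fun'
      ?_ ?_
  all_goals rw [uIoc_of_le ht]
  · exact aestronglyMeasurable_integral_mul_radialKernel hφ_meas hr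
  · filter_upwards [ae_restrict_mem measurableSet_Ioc] with s hs
    exact abs_integral_mul_radialKernel_le hφ_bdd hr hs.1 hs.2

lemma mul_le_integral_mul_radialKernel {a ρ : ℝ}
    (hφ_meas : AEStronglyMeasurable φ (volume.restrict (Ici 0)))
    (hφ_bdd : ∀ x ∈ Icc 0 (r + t), |φ x| ≤ M) (hφ_nonneg : ∀ x ∈ Ici 0, 0 ≤ φ x)
    (hφ_one : ∀ x ∈ Icc a (a + ρ), 1 ≤ φ x) (hρ : 0 < ρ) (hρa : 2 * ρ ≤ a) (hρr : 2 * ρ ≤ r)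
    (ht : a ≤ t - r) (hs : s ∈ Icc (r + a - 2 * ρ) (r + a - ρ)) :
    ρ * (sinh a * sinh r * exp (-(t / 2 + r + a))) ≤
      ∫ l in |r - s|..(r + s), φ l * radialKernel t r s l := by
  obtain ⟨hs_ge, hs_le⟩ := hs
  have hr : 0 < r := by linarith
  have hs0 : 0 < s := by linarith
  have hst : s ≤ t := by linarith
  have hkernel_nonneg : ∀ l ∈ Icc |r - s| (r + s), 0 ≤ radialKernel t r s l :=
    fun l hl => radialKernel_nonneg hs0.le hst hl
  have hleft : |r - s| ≤ a := abs_le.2 ⟨by linarith, by linarith⟩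
  have hright : a + ρ ≤ r + s := by linarith
  rw [← add_sub_cancel_left a ρ]
  refine sub_mul_le_integral_of_le hleft (by linarith) hright (fun l hl => ?_)
    (intervalIntegrable_mul_radialKernel hφ_meas hφ_bdd hr hs0 hst) fun l hl => ?_
  · exact mul_nonneg (hφ_nonneg l ((abs_nonneg _).trans hl.1.le))
      (hkernel_nonneg l (Ioc_subset_Icc_self hl))
  · exact (sinh_mul_sinh_mul_exp_le_radialKernel_of_mem_Icc hρ hρa hρr ht ⟨hs_ge, hs_le⟩
      hl).trans (le_mul_of_one_le_left (hkernel_nonneg l (Icc_subset_Icc hleft hright hl))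
        (hφ_one l hl))

lemma sq_mul_le_Isol {a ρ : ℝ} (hφ_meas : AEStronglyMeasurable φ (volume.restrict (Ici 0)))
    (hφ_bdd : ∀ x ∈ Icc 0 (r + t), |φ x| ≤ M) (hφ_nonneg : ∀ x ∈ Ici 0, 0 ≤ φ x)
    (hφ_one : ∀ x ∈ Icc a (a + ρ), 1 ≤ φ x) (hρ : 0 < ρ) (hρa : 2 * ρ ≤ a) (hρr : 2 * ρ ≤ r)
    (ht : a ≤ t - r) :
    1 / (π * √2) * (ρ ^ 2 * (sinh a * sinh r * exp (-(t / 2 + r + a)))) ≤ Isol t r φ := by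
  have hr : 0 < r := by linarith
  have hinner_nonneg : ∀ s ∈ Ioc 0 t,
      0 ≤ ∫ l in |r - s|..(r + s), φ l * radialKernel t r s l := fun s hs =>
    integral_nonneg (abs_sub_lt_add_of_pos hr hs.1).le fun l hl =>
      mul_nonneg (hφ_nonneg l ((abs_nonneg _).trans hl.1)) (radialKernel_nonneg hs.1.le hs.2 hl)
  have houter := sub_mul_le_integral_of_le (by linarith) (by linarith) (by linarith) hinner_nonneg
    (intervalIntegrable_integral_mul_radialKernel hφ_meas hφ_bdd (by linarith) hr)
    fun s hs => mul_le_integral_mul_radialKernel hφ_meas hφ_bdd hφ_nonneg hφ_one hρ hρa hρr ht hs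
  rw [Isol_eq_integral_radialKernel]
  refine mul_le_mul_of_nonneg_left (le_of_eq_of_le ?_ houter) (by positivity)
  ring

end RadialSolution

theorem first_step_lower_bound_general {a b δ : ℝ} (ha : 0 < a) (hab : a < b) (hδ : 0 < δ) :
    ∃ c : ℝ, 0 < c ∧
      ∀ φ : ℝ → ℝ, AEStronglyMeasurable φ (volume.restrict (Ici 0)) →
        (∀ R, BddAbove (φ '' Icc 0 R)) → (∀ x ∈ Ici 0, 0 ≤ φ x) → (∀ x ∈ Icc a b, 1 ≤ φ x) →
        ∀ t r : ℝ, δ ≤ r → a ≤ t - r →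
          c * exp (-((t - r) / 2)) * sinh r ^ (-(1 / 2) : ℝ) ≤ Isol t r φ := by
  obtain ⟨ρ, hρ, hρb, hρa, hρδ⟩ : ∃ ρ, 0 < ρ ∧ ρ ≤ b - a ∧ ρ ≤ a / 2 ∧ ρ ≤ δ / 2 := by
    have hmin : 0 < min (b - a) (min (a / 2) (δ / 2)) :=
      lt_min (sub_pos.2 hab) (lt_min (half_pos ha) (half_pos hδ))
    exact ⟨_, hmin, by simpa only [le_min_iff] using le_refl (min (b - a) (min (a / 2) (δ / 2)))⟩
  set k := (1 - exp (-(2 * δ))) / 2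
  have hk : 0 < k := half_pos (sub_pos.2 (exp_lt_one_iff.2 (by linarith)))
  have : 0 < sinh a := sinh_pos_iff.2 ha
  refine ⟨1 / (π * √2) * (ρ ^ 2 * (sinh a * exp (-a))) * k ^ (3 / 2 : ℝ), by positivity, ?_⟩
  intro φ hφ_meas hφ_bdd hφ_nonneg hφ_one t r hr ht
  obtain ⟨M, hM⟩ := hφ_bdd (r + t)
  have hφ_abs : ∀ x ∈ Icc 0 (r + t), |φ x| ≤ M := fun x hx =>
    (abs_of_nonneg (hφ_nonneg x hx.1)).trans_le (hM (mem_image_of_mem φ hx))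
  have hexp : exp (-(t / 2 + r + a)) = exp (-a) * exp (-((t - r) / 2)) * exp (-(3 / 2 * r)) := by
    rw [← exp_add, ← exp_add]; ring_nf
  calc 1 / (π * √2) * (ρ ^ 2 * (sinh a * exp (-a))) * k ^ (3 / 2 : ℝ) * exp (-((t - r) / 2)) *
        sinh r ^ (-(1 / 2) : ℝ)
      = 1 / (π * √2) * (ρ ^ 2 * (sinh a * exp (-a))) * exp (-((t - r) / 2)) *
          (k ^ (3 / 2 : ℝ) * sinh r ^ (-(1 / 2) : ℝ)) := by ring
    _ ≤ 1 / (π * √2) * (ρ ^ 2 * (sinh a * exp (-a))) * exp (-((t - r) / 2)) *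
          (sinh r * exp (-(3 / 2 * r))) :=
        mul_le_mul_of_nonneg_left (mul_sinh_rpow_neg_half_le hδ hr) (by positivity)
    _ = 1 / (π * √2) * (ρ ^ 2 * (sinh a * sinh r * exp (-(t / 2 + r + a)))) := by
        rw [hexp]; ring
    _ ≤ Isol t r φ := sq_mul_le_Isol hφ_meas hφ_abs hφ_nonneg
        (fun x hx => hφ_one x ⟨hx.1, by linarith [hx.2]⟩) hρ (by linarith) (by linarith) ht

theorem first_step_lower_bound (τ₀ : ℝ) (hτ₀ : 0 < τ₀) :
    ∃ c₀ : ℝ, 0 < c₀ ∧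
      ∀ u₁ : ℝ → ℝ, ContinuousOn u₁ (Set.Ici 0) → (∀ x ∈ Set.Ici (0 : ℝ), 0 ≤ u₁ x) →
        (∀ l ∈ Set.Icc τ₀ (3 * τ₀), 1 ≤ u₁ l) →
        ∀ t r : ℝ, 0 < t → 0 < r → τ₀ < t - r → t - r < 2 * τ₀ → 3 * τ₀ < t + r →
          Isol t r u₁ ≥ c₀ * Real.sinh r ^ (-(1 / 2) : ℝ) := by
  obtain ⟨c, hc, hbound⟩ := first_step_lower_bound_general hτ₀
    (show τ₀ < 3 * τ₀ by linarith) (half_pos hτ₀)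
  refine ⟨c * exp (-τ₀), by positivity, fun u₁ hcont hnonneg hone t r _ hr htr htr' htr_add => ?_⟩
  have hmeas := hcont.aestronglyMeasurable (μ := volume) measurableSet_Ici
  have hbdd : ∀ R, BddAbove (u₁ '' Icc 0 R) := fun R =>
    isCompact_Icc.bddAbove_image (hcont.mono Icc_subset_Ici_self)
  have hdecay : exp (-τ₀) ≤ exp (-((t - r) / 2)) := exp_le_exp.2 (by linarith)
  have : 0 < sinh r := sinh_pos_iff.2 hr
  calc c * exp (-τ₀) * sinh r ^ (-(1 / 2) : ℝ)
      ≤ c * exp (-((t - r) / 2)) * sinh r ^ (-(1 / 2) : ℝ) := by gcongr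
    _ ≤ Isol t r u₁ :=
        hbound u₁ hmeas hbdd hnonneg hone t r (by linarith) (by linarith)
end
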